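/- Let Q be an infinite set of positive integers, let n ≥ 1 be an integer and let τ > 2 + 1/n be a real number. Then the Hausdorff dimension of the liminf set W*_{τ,n}(Q) equals (n + ν(Q))/τ. -/

import Mathlib

/-!
The upper bound is the usual covering argument (`dimH_WStar_le`): near the origin there are `O(q ^ n)`
balls `B(p/q, q ^ -τ)` for each `q ∈ Q`, and `∑ q ^ (n - τ d)` over `Q` converges once
`τ d - n > ν(Q)`.

For the lower bound let `s < (n + ν(Q)) / τ`. A Cantor set inside `W*` with positive `s`-dimensional
Hausdorff measure is built from closed balls `shellBall τ (p, q)`, `q ∈ Q`, contained in the shell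
`q ^ -τ / 4 ≤ |x - p/q| < q ^ -τ`, where `p/q` is reduced in one fixed coordinate. All denominators of
one level lie in a single block `[N, 2N)` containing at least `N ^ σ` elements of `Q`; by
`frequently_card_ge` such blocks exist arbitrarily far out for `σ` close to `ν(Q)`.

Every `x` in all levels has infinitely many approximations with denominators in `Q`. An approximation
`d = p'/q'` with `q' ∉ Q` is excluded as follows (`not_approx`). If `p'/q'` equals the centre `p/q` of
the level-`N'` ball containing `x`, then `q'` is a proper multiple of `q` and the shell is too far
away. If it does not, the distance `≥ 1/(q q')` between the two rational points rules out all `q'`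
between the two consecutive scales `N` and `N'` except those in the critical range
`N ^ (τ - 1) / 2 ≤ q'`, `q' ^ (τ - 1) ≤ 4 N'`. The points of level `N'` are therefore chosen at distance
more than `2 q' ^ -τ` from every rational point with denominator `q'` in that range. This costs only a
small proportion of the candidates (`good_count`, `eventually_small_sums`, `eventually_third_sum`): the
relevant sums are small because `n (τ - 1) > n + 1`, which is the hypothesis `τ > 2 + 1/n`.

Reducedness is arranged by taking numerators `1 + D m` with `D ≤ N ^ ε` a primorial: small
primes then never divide the numerator, and the large prime factors of `q` are too few to matter
(`eventually_exists_progression`).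

The children of a ball are equidistributed in it down to the scale `N ^ -τ` (`children_mass`): the
number in a ball of radius `ρ` is bounded by counting each denominator separately, and also by the
`1/(4N²)`-separation of rationals of denominator `< 2N`. Splitting the mass of each ball equally among
its children thus gives masses `≤ ρ ^ s` (`exists_next_level`), and the mass distribution principle
`hausdorffMeasure_iInter_ne_zero`, a compactness argument that needs no limit measure, concludes.
-/

open MeasureTheory Filter
open scoped ENNReal

/-- The exponent of convergence `ν(S)` of a set `S` of positive integers. -/
noncomputable def expConv (S : Set ℕ) : ℝ :=
  sInf {ν : ℝ | 0 < ν ∧ Summable (fun q : S => ((q : ℕ) : ℝ) ^ (-ν))}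

/-- The set of pairs `(p, q) ∈ ℤⁿ × Q` approximating `x ∈ ℝⁿ` at order `τ`,
i.e. with `|x - p/q| < q^{-τ}` in the supremum norm. -/
def approxPairs (n : ℕ) (τ : ℝ) (Q : Set ℕ) (x : Fin n → ℝ) : Set ((Fin n → ℤ) × ℕ) :=
  {pq | pq.2 ∈ Q ∧ ‖x - fun i => (pq.1 i : ℝ) / (pq.2 : ℝ)‖ < (pq.2 : ℝ) ^ (-τ)}

/-- The liminf set `W*_{τ,n}(Q)`: points of `ℝⁿ` which are `τ`-approximable by
infinitely many rationals with denominators in `Q`, but only finitely many with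
(positive) denominators outside `Q`. -/
def WStar (n : ℕ) (τ : ℝ) (Q : Set ℕ) : Set (Fin n → ℝ) :=
  {x | (approxPairs n τ Q x).Infinite ∧
    (approxPairs n τ ({q | 0 < q} \ Q) x).Finite}

/-! ### Lattice point counts and the mass distribution principle -/

theorem card_Icc_le (z t : ℝ) (ht : 0 ≤ t) :
    ((Finset.Icc ⌈z - t⌉ ⌊z + t⌋).card : ℝ) ≤ 2 * t + 1 := by
  rw [Int.card_Icc]
  have h1 := Int.floor_le (z + t)
  have h2 := Int.le_ceil (z - t)
  rcases le_total (⌊z + t⌋ + 1 - ⌈z - t⌉) 0 with h | h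
  · rw [Int.toNat_of_nonpos h]; simp; linarith
  · have : (((⌊z + t⌋ + 1 - ⌈z - t⌉).toNat : ℤ) : ℝ) = ((⌊z + t⌋ + 1 - ⌈z - t⌉ : ℤ) : ℝ) := by
      rw [Int.toNat_of_nonneg h]
    rw [Int.cast_natCast] at this
    rw [this]; push_cast; linarith

theorem le_card_Icc (z t : ℝ) :
    2 * t - 1 ≤ ((Finset.Icc ⌈z - t⌉ ⌊z + t⌋).card : ℝ) := by
  rw [Int.card_Icc]
  have h1 := Int.lt_floor_add_one (z + t)
  have h2 := Int.ceil_lt_add_one (z - t)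
  have h3 := Int.self_le_toNat (⌊z + t⌋ + 1 - ⌈z - t⌉)
  have h4 : (((⌊z + t⌋ + 1 - ⌈z - t⌉ : ℤ)) : ℝ) ≤ (((⌊z + t⌋ + 1 - ⌈z - t⌉).toNat : ℤ) : ℝ) := by
    exact_mod_cast h3
  rw [Int.cast_natCast] at h4
  push_cast at h4; linarith

theorem card_box_le {n : ℕ} (S : Finset (Fin n → ℤ)) (z : Fin n → ℝ) (t : ℝ) (ht : 0 ≤ t)
    (h : ∀ m ∈ S, ∀ i, |(m i : ℝ) - z i| ≤ t) : (S.card : ℝ) ≤ (2 * t + 1) ^ n := by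
  classical
  have hsub : S ⊆ Fintype.piFinset (fun i => Finset.Icc ⌈z i - t⌉ ⌊z i + t⌋) := by
    intro m hm
    rw [Fintype.mem_piFinset]
    intro i
    have := abs_le.1 (h m hm i)
    rw [Finset.mem_Icc, Int.ceil_le, Int.le_floor]
    constructor <;> linarith
  calc (S.card : ℝ)
      ≤ (Fintype.piFinset (fun i => Finset.Icc ⌈z i - t⌉ ⌊z i + t⌋)).card := by exact_mod_cast Finset.card_le_card hsub
    _ = ∏ i, ((Finset.Icc ⌈z i - t⌉ ⌊z i + t⌋).card : ℝ) := by
        rw [Fintype.card_piFinset]; push_cast; rfl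
    _ ≤ ∏ i : Fin n, (2 * t + 1) :=
        Finset.prod_le_prod (fun _ _ => by positivity) (fun i _ => card_Icc_le _ _ ht)
    _ = _ := by simp

/-- Mass distribution principle along a decreasing sequence of compact sets: finitely supported
weights `w k` of constant total mass, with `w k`-mass at most `ρ ^ s` near any ball of radius
`ρ ≥ r k`, where `r k → 0`, force the intersection to have positive `s`-dimensional Hausdorff
measure. -/
theorem hausdorffMeasure_iInter_ne_zero {X ι : Type*} [MetricSpace X] [MeasurableSpace X]
    [BorelSpace X] {s : ℝ} (hs : 0 < s)
    (K : ℕ → Set X) (hK : ∀ k, IsCompact (K k)) (hanti : Antitone K)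
    (F : ℕ → Finset ι) (B : ι → Set X) (w : ℕ → ι → ℝ) (hw : ∀ k, ∀ c ∈ F k, 0 ≤ w k c)
    (hB : ∀ c, (B c).Nonempty)
    (hBK : ∀ k, ∀ c ∈ F k, B c ⊆ K k) (r : ℕ → ℝ) (hr : Tendsto r atTop (nhds 0))
    (W : ℝ) (hW : 0 < W) (htot : ∀ k, ∑ c ∈ F k, w k c = W)
    (hmass : ∀ k x ρ, r k ≤ ρ → ∀ S ⊆ F k,
      (∀ c ∈ S, (B c ∩ Metric.closedBall x ρ).Nonempty) → ∑ c ∈ S, w k c ≤ ρ ^ s) :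
    μH[s] (⋂ k, K k) ≠ 0 := by
  classical
  intro h0
  set E := ⋂ k, K k with hE
  rw [Measure.hausdorffMeasure_apply] at h0
  have h1 := (ENNReal.iSup_eq_zero.1 h0) 1
  have h2 := (ENNReal.iSup_eq_zero.1 h1) one_pos
  have hη : (0 : ℝ≥0∞) < ENNReal.ofReal (W / 2) := by simpa using hW
  rw [← h2] at hη
  simp only [iInf_lt_iff] at hη
  obtain ⟨t, htE, ht1, htsum⟩ := hη
  obtain ⟨ε', hε', hεs⟩ := ENNReal.exists_pos_sum_of_countable' (ι := ℕ)
    (ε := ENNReal.ofReal (W / 2)) (by simpa using hW)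
  -- choose radii slightly larger than the diameters
  have hch : ∀ i, ∃ ρ : ℝ, 0 < ρ ∧ ((t i).Nonempty → ∃ x ∈ t i, t i ⊆ Metric.ball x ρ) ∧
      ENNReal.ofReal (ρ ^ s) ≤ (⨆ _ : (t i).Nonempty, Metric.ediam (t i) ^ s) + ε' i := by
    intro i
    set d := (Metric.ediam (t i)).toReal with hd
    have hdfin : Metric.ediam (t i) ≠ ∞ := ne_top_of_le_ne_top ENNReal.one_ne_top (ht1 i)
    have hd0 : 0 ≤ d := ENNReal.toReal_nonneg
    obtain ⟨e, he0, hee⟩ : ∃ e : ℝ, 0 < e ∧ ENNReal.ofReal e ≤ ε' i := by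
      rcases eq_or_ne (ε' i) ∞ with h | h
      · exact ⟨1, one_pos, by simp [h]⟩
      · exact ⟨(ε' i).toReal, ENNReal.toReal_pos (hε' i).ne' h, by rw [ENNReal.ofReal_toReal h]⟩
    have hcont : ContinuousAt (fun y : ℝ => y ^ s) d :=
      Real.continuousAt_rpow_const _ _ (Or.inr hs.le)
    have hlt : ∀ᶠ y in nhds d, y ^ s < d ^ s + e :=
      hcont.eventually (gt_mem_nhds (by linarith : d ^ s < d ^ s + e))
    obtain ⟨δ, hδ, hball⟩ := Metric.eventually_nhds_iff.1 hlt
    have hρ := hball (y := d + δ / 2) (by rw [Real.dist_eq]; rw [abs_of_pos] <;> linarith)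
    refine ⟨d + δ / 2, by linarith, ?_, ?_⟩
    · rintro ⟨x, hx⟩
      refine ⟨x, hx, fun y hy => ?_⟩
      rw [Metric.mem_ball]
      have := Metric.edist_le_ediam_of_mem hy hx
      have h3 : dist y x ≤ d := by
        rw [dist_edist, hd]; exact ENNReal.toReal_mono hdfin this
      linarith
    · have hds : ENNReal.ofReal (d ^ s) = (⨆ _ : (t i).Nonempty, Metric.ediam (t i) ^ s) := by
        rw [← ENNReal.ofReal_rpow_of_nonneg hd0 hs.le, hd, ENNReal.ofReal_toReal hdfin]
        by_cases hne : (t i).Nonempty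
        · simp [hne]
        · rw [Set.not_nonempty_iff_eq_empty] at hne
          simp [hne, hs]
      calc ENNReal.ofReal ((d + δ / 2) ^ s) ≤ ENNReal.ofReal (d ^ s + e) :=
            ENNReal.ofReal_le_ofReal hρ.le
        _ = ENNReal.ofReal (d ^ s) + ENNReal.ofReal e :=
            ENNReal.ofReal_add (by positivity) he0.le
        _ ≤ _ := by rw [hds]; gcongr
  choose ρ hρ0 hρx hρs using hch
  have hX : Nonempty X := by
    by_contra hne
    rw [not_nonempty_iff] at hne
    have : F 0 = ∅ := by
      by_contra h
      obtain ⟨c, hc⟩ := Finset.nonempty_iff_ne_empty.2 h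
      exact hne.elim (hB c).some
    have := htot 0
    simp_all
  have hcen : ∀ i, ∃ x, t i ⊆ Metric.ball x (ρ i) := by
    intro i
    by_cases hne : (t i).Nonempty
    · obtain ⟨x, -, hx⟩ := hρx i hne; exact ⟨x, hx⟩
    · exact ⟨hX.some, by rw [Set.not_nonempty_iff_eq_empty.1 hne]; exact Set.empty_subset _⟩
  choose x hx using hcen
  -- finitely many of the enlarged balls cover the intersection, hence also some `K k`
  have hEc : IsCompact E := by
    refine (hK 0).of_isClosed_subset (isClosed_iInter fun k => (hK k).isClosed) (Set.iInter_subset _ _)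
  obtain ⟨I, hI⟩ := hEc.elim_finite_subcover (fun i => Metric.ball (x i) (ρ i))
    (fun i => Metric.isOpen_ball) (htE.trans (Set.iUnion_mono hx))
  obtain ⟨k0, hk0⟩ := exists_subset_nhds_of_isCompact (V := K) hanti.directed_ge hK
    (U := ⋃ i ∈ I, Metric.ball (x i) (ρ i)) (fun y hy =>
      (isOpen_biUnion fun i _ => Metric.isOpen_ball).mem_nhds (hI hy))
  have hrk : ∀ᶠ k in atTop, ∀ i ∈ I, r k < ρ i := by
    rw [Filter.eventually_all_finset]
    intro i _
    exact hr.eventually (gt_mem_nhds (hρ0 i))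
  obtain ⟨k, hkr, hkk⟩ := (hrk.and (eventually_ge_atTop k0)).exists
  have hle : W ≤ ∑ i ∈ I, ρ i ^ s := by
    rw [← htot k]
    calc ∑ c ∈ F k, w k c
        ≤ ∑ c ∈ F k, ∑ i ∈ I,
            if (B c ∩ Metric.closedBall (x i) (ρ i)).Nonempty then w k c else 0 := by
          apply Finset.sum_le_sum
          intro c hc
          obtain ⟨y, hy⟩ := hB c
          have := hk0 (hanti hkk (hBK k c hc hy))
          simp only [Set.mem_iUnion] at this
          obtain ⟨i, hi, hyi⟩ := this
          have hne : (B c ∩ Metric.closedBall (x i) (ρ i)).Nonempty :=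
            ⟨y, hy, Metric.ball_subset_closedBall hyi⟩
          have hsi := Finset.single_le_sum (s := I) (f := fun i =>
            if (B c ∩ Metric.closedBall (x i) (ρ i)).Nonempty then w k c else 0)
            (fun j _ => by split_ifs; exacts [hw k c hc, le_rfl]) hi
          simpa only [if_pos hne] using hsi
      _ = ∑ i ∈ I, ∑ c ∈ (F k).filter
            (fun c => (B c ∩ Metric.closedBall (x i) (ρ i)).Nonempty), w k c := by
          rw [Finset.sum_comm]
          simp only [Finset.sum_filter]
      _ ≤ _ := by
          apply Finset.sum_le_sum
          intro i hi
          exact hmass k (x i) (ρ i) (hkr i hi).le _ (Finset.filter_subset _ _)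
            (fun c hc => (Finset.mem_filter.1 hc).2)
  have hlt : ENNReal.ofReal (∑ i ∈ I, ρ i ^ s) < ENNReal.ofReal W := by
    rw [ENNReal.ofReal_sum_of_nonneg (fun i _ => Real.rpow_nonneg (hρ0 i).le _)]
    calc ∑ i ∈ I, ENNReal.ofReal (ρ i ^ s)
        ≤ ∑' i, ((⨆ _ : (t i).Nonempty, Metric.ediam (t i) ^ s) + ε' i) :=
          (Finset.sum_le_sum fun i _ => hρs i).trans (ENNReal.sum_le_tsum _)
      _ = _ := ENNReal.tsum_add
      _ < ENNReal.ofReal (W / 2) + ENNReal.ofReal (W / 2) := ENNReal.add_lt_add htsum hεs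
      _ = ENNReal.ofReal W := by
          rw [← ENNReal.ofReal_add (by positivity) (by positivity)]; simp
  exact absurd ((ENNReal.ofReal_lt_ofReal_iff hW).1 hlt) (not_lt.2 hle)

/-! ### Exponent of convergence and the upper bound -/

theorem expConv_nonneg (S : Set ℕ) : 0 ≤ expConv S :=
  Real.sInf_nonneg fun _ h => h.1.le

theorem expConv_bddBelow (S : Set ℕ) :
    BddBelow {ν : ℝ | 0 < ν ∧ Summable (fun q : S => ((q : ℕ) : ℝ) ^ (-ν))} :=
  ⟨0, fun _ h => h.1.le⟩

theorem summable_of_one_lt {S : Set ℕ} {ν : ℝ} (h : 1 < ν) :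
    Summable (fun q : S => ((q : ℕ) : ℝ) ^ (-ν)) := by
  have := (Real.summable_nat_rpow (p := -ν)).2 (by linarith)
  exact this.subtype S

theorem expConv_le_one (S : Set ℕ) : expConv S ≤ 1 := by
  refine le_of_forall_pos_le_add fun δ hδ => ?_
  exact csInf_le (expConv_bddBelow S) ⟨by linarith, summable_of_one_lt (by linarith)⟩

theorem summable_of_expConv_lt {S : Set ℕ} (hS : ∀ q ∈ S, 0 < q) {ν : ℝ} (h : expConv S < ν) :
    Summable (fun q : S => ((q : ℕ) : ℝ) ^ (-ν)) := by
  obtain ⟨ν', ⟨_, hs⟩, hlt⟩ := exists_lt_of_csInf_lt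
    (⟨2, by norm_num, summable_of_one_lt (by norm_num)⟩ :
      {ν : ℝ | 0 < ν ∧ Summable (fun q : S => ((q : ℕ) : ℝ) ^ (-ν))}.Nonempty) h
  refine Summable.of_nonneg_of_le (fun q => by positivity) (fun q => ?_) hs
  have : (1 : ℝ) ≤ (q : ℕ) := by exact_mod_cast hS q q.2
  exact Real.rpow_le_rpow_of_exponent_le this (by linarith)

/-- Below the exponent of convergence, arbitrarily far blocks `[N, 2N)` contain at least `N ^ σ`
elements of the set; otherwise a dyadic decomposition bounds the series. -/
theorem frequently_card_ge {Q : Set ℕ} [DecidablePred (· ∈ Q)] {σ : ℝ}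
    (hσ0 : 0 < σ) (hσ : σ < expConv Q) :
    ∃ᶠ N : ℕ in atTop, (N : ℝ) ^ σ ≤ ((Finset.Ico N (2 * N)).filter (· ∈ Q)).card := by
  by_contra hcon
  rw [not_frequently, eventually_atTop] at hcon
  obtain ⟨N0, hN0⟩ := hcon
  obtain ⟨σ', h1, h2⟩ := exists_between hσ
  set f : ℕ → ℝ := Set.indicator Q (fun q => (q : ℝ) ^ (-σ')) with hf
  have hf0 : ∀ q, 0 ≤ f q := fun q => Set.indicator_nonneg (fun q _ => by positivity) q
  set θ : ℝ := (2 : ℝ) ^ (σ - σ') with hθ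
  have hθ0 : 0 < θ := by positivity
  have hθ1 : θ < 1 := Real.rpow_lt_one_of_one_lt_of_neg (by norm_num) (by linarith)
  have hblock : ∀ k : ℕ, N0 ≤ 2 ^ k → ∑ q ∈ Finset.Ico (2 ^ k) (2 ^ (k + 1)), f q ≤ θ ^ k := by
    intro k hk
    have hc := not_le.1 (hN0 _ hk)
    have hcast : ((2 ^ k : ℕ) : ℝ) = (2 : ℝ) ^ (k : ℝ) := by push_cast; rw [Real.rpow_natCast]
    calc ∑ q ∈ Finset.Ico (2 ^ k) (2 ^ (k + 1)), f q
        = ∑ q ∈ (Finset.Ico (2 ^ k) (2 * 2 ^ k)).filter (· ∈ Q), (q : ℝ) ^ (-σ') := by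
          rw [Finset.sum_filter, pow_succ']
          refine Finset.sum_congr rfl fun q _ => ?_
          rw [hf, Set.indicator_apply]
      _ ≤ ∑ q ∈ (Finset.Ico (2 ^ k) (2 * 2 ^ k)).filter (· ∈ Q), ((2 ^ k : ℕ) : ℝ) ^ (-σ') := by
          refine Finset.sum_le_sum fun q hq => ?_
          have := (Finset.mem_Ico.1 (Finset.mem_filter.1 hq).1).1
          exact Real.rpow_le_rpow_of_nonpos (by positivity) (by exact_mod_cast this) (by linarith)
      _ = (((Finset.Ico (2 ^ k) (2 * 2 ^ k)).filter (· ∈ Q)).card : ℝ) *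
            ((2 ^ k : ℕ) : ℝ) ^ (-σ') := by rw [Finset.sum_const, nsmul_eq_mul]
      _ ≤ ((2 ^ k : ℕ) : ℝ) ^ σ * ((2 ^ k : ℕ) : ℝ) ^ (-σ') := by gcongr
      _ = θ ^ k := by
          rw [← Real.rpow_add (by positivity), hcast, ← Real.rpow_mul (by norm_num), hθ,
            ← Real.rpow_natCast, ← Real.rpow_mul (by norm_num)]
          congr 1; ring
  obtain ⟨k0, hk0⟩ : ∃ k0 : ℕ, N0 ≤ 2 ^ k0 := ⟨N0, Nat.lt_two_pow_self.le⟩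
  have hpart : ∀ j : ℕ, ∑ q ∈ Finset.range (2 ^ (k0 + j)), f q ≤
      ∑ q ∈ Finset.range (2 ^ k0), f q + ∑ i ∈ Finset.range j, θ ^ (k0 + i) := by
    intro j
    induction j with
    | zero => simp
    | succ j ih =>
      rw [Finset.sum_range_succ, ← add_assoc k0 j 1]
      rw [← Finset.sum_range_add_sum_Ico f
        (Nat.pow_le_pow_right (by norm_num : 0 < 2) (Nat.le_succ (k0 + j)))]
      have := hblock (k0 + j) (hk0.trans (Nat.pow_le_pow_right (by norm_num) (by omega)))
      simp only [Nat.succ_eq_add_one]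
      linarith
  have hgeom : ∀ j : ℕ, ∑ i ∈ Finset.range j, θ ^ (k0 + i) ≤ ∑' i, θ ^ i := by
    intro j
    have hsum := summable_geometric_of_lt_one hθ0.le hθ1
    calc ∑ i ∈ Finset.range j, θ ^ (k0 + i) ≤ ∑ i ∈ Finset.range j, θ ^ i := by
          refine Finset.sum_le_sum fun i _ => ?_
          exact pow_le_pow_of_le_one hθ0.le hθ1.le (by omega)
      _ ≤ _ := hsum.sum_le_tsum _ (fun i _ => by positivity)
  have hsum : Summable f := by
    refine summable_of_sum_range_le (c := ∑ q ∈ Finset.range (2 ^ k0), f q + ∑' i, θ ^ i) hf0 ?_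
    intro m
    calc ∑ q ∈ Finset.range m, f q ≤ ∑ q ∈ Finset.range (2 ^ (k0 + m)), f q := by
          refine Finset.sum_le_sum_of_subset_of_nonneg (Finset.range_mono ?_) fun q _ _ => hf0 q
          exact (Nat.lt_two_pow_self (n := m)).le.trans
            (Nat.pow_le_pow_right (by norm_num) (by omega))
      _ ≤ _ := (hpart m).trans (by linarith [hgeom m])
  have : expConv Q ≤ σ' := by
    refine csInf_le (expConv_bddBelow Q) ⟨by linarith, ?_⟩
    exact summable_subtype_iff_indicator.2 hsum
  linarith

/-- Covering bound: the limsup set is covered by the balls `B(p/q, q^{-τ})`, `q ∈ Q`, and the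
corresponding series of `d`-th powers of diameters converges for `τ d - n > ν(Q)`. -/
theorem dimH_WStar_le (Q : Set ℕ) (hQpos : ∀ q ∈ Q, 0 < q)
    (n : ℕ) (τ : ℝ) (hτ : 0 < τ) (hn : 1 ≤ n) :
    dimH (WStar n τ Q) ≤ ENNReal.ofReal ((n + expConv Q) / τ) := by
  classical
  refine le_of_forall_gt_imp_ge_of_dense fun c hc => ?_
  obtain ⟨d, hd1, hd2⟩ := ENNReal.lt_iff_exists_nnreal_btwn.1 hc
  refine le_trans (dimH_le_of_hausdorffMeasure_ne_top ?_) hd2.le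
  have hn0 : (1 : ℝ) ≤ n := by exact_mod_cast hn
  have hν0 := expConv_nonneg Q
  have hvpos : 0 < (n + expConv Q) / τ := by positivity
  have hd : (n + expConv Q) / τ < d := by
    rw [ENNReal.ofReal_lt_iff_lt_toReal hvpos.le (by simp)] at hd1
    simpa using hd1
  have hd0 : (0 : ℝ) < d := hvpos.trans hd
  rw [div_lt_iff₀ hτ] at hd
  have hsum := summable_of_expConv_lt (ν := d * τ - n) hQpos (by linarith)
  -- only finitely many numerators per denominator matter within a bounded region
  suffices h : μH[d] (⋃ R : ℕ, WStar n τ Q ∩ Metric.closedBall 0 R) = 0 by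
    rw [← Set.inter_iUnion, Metric.iUnion_closedBall_nat, Set.inter_univ] at h
    rw [h]; simp
  rw [measure_iUnion_null_iff]
  intro R
  let P : Q → Finset (Fin n → ℤ) := fun q =>
    Fintype.piFinset (fun _ => Finset.Icc ⌈(0 : ℝ) - (R + 1) * (q : ℕ)⌉ ⌊(0 : ℝ) + (R + 1) * (q : ℕ)⌋)
  let A := Σ q : Q, P q
  let t : A → Set (Fin n → ℝ) := fun a =>
    Metric.ball (fun i => (a.2.1 i : ℝ) / ((a.1 : ℕ) : ℝ)) (((a.1 : ℕ) : ℝ) ^ (-τ))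
  let f : A → ℝ≥0∞ := fun a => ENNReal.ofReal (2 * ((a.1 : ℕ) : ℝ) ^ (-τ)) ^ (d : ℝ)
  have hdiam : ∀ a, Metric.ediam (t a) ≤ ENNReal.ofReal (2 * ((a.1 : ℕ) : ℝ) ^ (-τ)) := by
    intro a
    refine Metric.ediam_le fun x hx y hy => ?_
    rw [edist_dist]
    refine ENNReal.ofReal_le_ofReal ?_
    have h1 := Metric.mem_ball.1 hx
    have h2 := Metric.mem_ball'.1 hy
    linarith [dist_triangle x (fun i => (a.2.1 i : ℝ) / ((a.1 : ℕ) : ℝ)) y]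
  -- there are `O(q ^ n)` balls of denominator `q`, so this series is comparable to `∑ q ^ (n - τ d)`
  have hfsum : ∑' a, f a ≠ ∞ := by
    have hP : ∀ q : Q, ((P q).card : ℝ) ≤ (2 * ((R + 1) * (q : ℕ)) + 1) ^ n := by
      intro q
      refine card_box_le (P q) (fun _ => 0) _ (by positivity) ?_
      intro m hm i
      have := Fintype.mem_piFinset.1 hm i
      rw [Finset.mem_Icc, Int.ceil_le, Int.le_floor] at this
      rw [abs_le]; constructor <;> linarith [this.1, this.2]
    have hterm : ∀ q : Q, ∑' p : P q, f ⟨q, p⟩ ≤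
        ENNReal.ofReal ((2 * (R + 1) + 1) ^ n * 2 ^ (d : ℝ) * ((q : ℕ) : ℝ) ^ (-(d * τ - n) : ℝ)) := by
      intro q
      have hq : (1 : ℝ) ≤ (q : ℕ) := by exact_mod_cast hQpos q q.2
      have hq0 : (0 : ℝ) < (q : ℕ) := by linarith
      have : ∑' p : P q, f ⟨q, p⟩ =
          ENNReal.ofReal ((P q).card * (2 * ((q : ℕ) : ℝ) ^ (-τ)) ^ (d : ℝ)) := by
        simp only [f]
        rw [tsum_fintype, Finset.sum_const, nsmul_eq_mul,
          ENNReal.ofReal_mul (p := ((P q).card : ℝ)) (by positivity), ENNReal.ofReal_natCast,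
          ENNReal.ofReal_rpow_of_nonneg (by positivity) hd0.le]
        simp
      rw [this]
      refine ENNReal.ofReal_le_ofReal ?_
      calc ((P q).card : ℝ) * (2 * ((q : ℕ) : ℝ) ^ (-τ)) ^ (d : ℝ)
          ≤ ((2 * (R + 1) + 1) * (q : ℕ)) ^ n * (2 * ((q : ℕ) : ℝ) ^ (-τ)) ^ (d : ℝ) := by
            gcongr
            refine (hP q).trans ?_
            gcongr
            nlinarith
        _ = _ := by
            rw [Real.mul_rpow (by norm_num) (by positivity), mul_pow, ← Real.rpow_mul hq0.le,
              neg_sub, sub_eq_add_neg, Real.rpow_add hq0, Real.rpow_natCast]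
            ring_nf
    rw [ENNReal.tsum_sigma' (f := f)]
    refine ne_top_of_le_ne_top ?_ (ENNReal.tsum_le_tsum hterm)
    exact (hsum.mul_left _).tsum_ofReal_ne_top
  -- each tail of the family of balls still covers the set, and the tails of the series tend to zero
  have htail := ENNReal.tendsto_tsum_compl_atTop_zero hfsum
  refine le_antisymm ?_ zero_le
  refine (Measure.hausdorffMeasure_le_liminf_tsum (β := Finset A) (ι := fun s => {a // a ∉ s})
    (l := atTop) (d : ℝ) _ (fun s => (∑' b : {x // x ∉ s}, f b) ^ (1 / (d : ℝ))) ?_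
    (fun s a => t a.1) ?_ ?_).trans ?_
  · have := htail.ennrpow_const (1 / (d : ℝ))
    rwa [ENNReal.zero_rpow_of_pos (by positivity)] at this
  · refine Eventually.of_forall fun s a => (hdiam a.1).trans ?_
    have h1 : f a.1 ≤ ∑' b : {x // x ∉ s}, f b := ENNReal.le_tsum (f := fun b : {x // x ∉ s} => f b) a
    calc ENNReal.ofReal (2 * ((a.1.1 : ℕ) : ℝ) ^ (-τ)) = f a.1 ^ (1 / (d : ℝ)) := by
          simp only [f]
          rw [← ENNReal.rpow_mul, mul_one_div_cancel hd0.ne', ENNReal.rpow_one]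
      _ ≤ _ := ENNReal.rpow_le_rpow h1 (by positivity)
  · refine Eventually.of_forall fun s => ?_
    rintro x ⟨⟨hinf, -⟩, hxR⟩
    have hfin : ((s : Set A).image (fun a => ((a.2.1, (a.1 : ℕ)) : (Fin n → ℤ) × ℕ))).Finite :=
      s.finite_toSet.image _
    obtain ⟨⟨p, q⟩, hpq, hnot⟩ := hinf.exists_notMem_finite hfin
    obtain ⟨hq, hx⟩ := hpq
    simp only at hq hx
    have hq1 : (1 : ℝ) ≤ q := by exact_mod_cast hQpos q hq
    have hp : p ∈ P ⟨q, hq⟩ := by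
      rw [Fintype.mem_piFinset]
      intro i
      have h1 := (norm_le_pi_norm _ i).trans hx.le
      have h2 : (q : ℝ) ^ (-τ) ≤ 1 := Real.rpow_le_one_of_one_le_of_nonpos hq1 (by linarith)
      have h3 := (norm_le_pi_norm x i).trans (mem_closedBall_zero_iff.1 hxR)
      simp only [Pi.sub_apply, Real.norm_eq_abs] at h1 h3
      have h4 : |(p i : ℝ) / q| ≤ R + 1 := by
        have := abs_sub_abs_le_abs_sub ((p i : ℝ) / q) (x i)
        rw [abs_sub_comm] at this
        linarith
      rw [abs_div, abs_of_pos (by linarith : (0 : ℝ) < q), div_le_iff₀ (by linarith), abs_le] at h4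
      rw [Finset.mem_Icc, Int.ceil_le, Int.le_floor]
      constructor <;> linarith [h4.1, h4.2]
    refine Set.mem_iUnion.2 ⟨⟨⟨⟨q, hq⟩, ⟨p, hp⟩⟩, fun hmem => hnot ⟨_, hmem, rfl⟩⟩, ?_⟩
    simp only [t, Metric.mem_ball, dist_eq_norm]
    exact hx
  · refine (liminf_le_liminf (v := fun s : Finset A => ∑' b : {x // x ∉ s}, f b)
      (Eventually.of_forall fun s => ?_)).trans htail.liminf_eq.le
    exact ENNReal.tsum_le_tsum fun a => ENNReal.rpow_le_rpow (hdiam a.1) hd0.le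

/-! ### Numerators in a progression are mostly coprime to the denominator -/

/-- A prime not dividing `D` divides `1 + D m` for at most one residue class of `m`. -/
theorem card_dvd_le (D ℓ : ℕ) (hℓ : ℓ.Prime) (hD : ¬ ℓ ∣ D) (a b : ℤ) :
    (((Finset.Icc a b).filter (fun m : ℤ => (ℓ : ℤ) ∣ 1 + D * m)).card : ℝ) ≤
      (Finset.Icc a b).card / (ℓ : ℝ) + 1 := by
  rcases ((Finset.Icc a b).filter (fun m : ℤ => (ℓ : ℤ) ∣ 1 + D * m)).eq_empty_or_nonempty with h | h
  · rw [h]; simp; positivity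
  obtain ⟨v, hv⟩ := h
  rw [Finset.mem_filter] at hv
  have hℓ0 : (0 : ℤ) < ℓ := by exact_mod_cast hℓ.pos
  have hsub : (Finset.Icc a b).filter (fun m : ℤ => (ℓ : ℤ) ∣ 1 + D * m) ⊆
      (Finset.Ioc (a - 1) b).filter (fun m : ℤ => m ≡ v [ZMOD ℓ]) := by
    intro m hm
    rw [Finset.mem_filter, Finset.mem_Icc] at hm
    rw [Finset.mem_filter, Finset.mem_Ioc]
    refine ⟨⟨by omega, hm.1.2⟩, ?_⟩
    have h1 : (ℓ : ℤ) ∣ D * (v - m) := by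
      have := dvd_sub hv.2 hm.2
      have h2 : (1 + D * v) - (1 + D * m) = (D : ℤ) * (v - m) := by ring
      rwa [h2] at this
    rw [Int.modEq_iff_dvd]
    rcases (Nat.prime_iff_prime_int.1 hℓ).dvd_or_dvd h1 with h2 | h2
    · exact absurd (Int.natCast_dvd_natCast.1 h2) hD
    · exact h2
  have hcard := Int.Ioc_filter_modEq_card (a - 1) b hℓ0 v
  have hab : a ≤ b := by
    have := Finset.mem_Icc.1 hv.1; omega
  have hL : ((Finset.Icc a b).card : ℝ) = b + 1 - a := by
    rw [Int.card_Icc]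
    have : (((b + 1 - a).toNat : ℤ) : ℝ) = ((b + 1 - a : ℤ) : ℝ) := by
      rw [Int.toNat_of_nonneg (by omega)]
    rw [Int.cast_natCast] at this
    rw [this]; push_cast; ring
  have h3 : (((Finset.Icc a b).filter (fun m : ℤ => (ℓ : ℤ) ∣ 1 + D * m)).card : ℤ) ≤
      max (⌊((b - v : ℤ) : ℚ) / (ℓ : ℤ)⌋ - ⌊(((a - 1) - v : ℤ) : ℚ) / (ℓ : ℤ)⌋) 0 := by
    refine le_trans (Int.ofNat_le.2 (Finset.card_le_card hsub)) (le_of_eq ?_)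
    rw [hcard]; push_cast; rfl
  have hℓq : (0 : ℚ) < ℓ := by exact_mod_cast hℓ.pos
  have h4 : (((Finset.Icc a b).filter (fun m : ℤ => (ℓ : ℤ) ∣ 1 + D * m)).card : ℚ) ≤
      (b + 1 - a) / ℓ + 1 := by
    have h5 : ((((Finset.Icc a b).filter (fun m : ℤ => (ℓ : ℤ) ∣ 1 + D * m)).card : ℤ) : ℚ) ≤ _ :=
      Int.cast_le.2 h3
    rw [Int.cast_natCast] at h5
    refine h5.trans ?_
    rw [Int.cast_max]
    have hab' : (a : ℚ) ≤ b := by exact_mod_cast hab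
    refine max_le ?_ ?_
    · have h6 := Int.floor_le (((b - v : ℤ) : ℚ) / (ℓ : ℤ))
      have h7 := Int.lt_floor_add_one ((((a - 1) - v : ℤ) : ℚ) / (ℓ : ℤ))
      have h8 : (b + 1 - a : ℚ) / ℓ = ((b - v : ℤ) : ℚ) / (ℓ : ℤ) -
          (((a - 1) - v : ℤ) : ℚ) / (ℓ : ℤ) := by
        push_cast; ring
      push_cast at *
      linarith
    · have : (0 : ℚ) ≤ (b + 1 - a) / ℓ := div_nonneg (by linarith) hℓq.le
      push_cast; linarith
  rw [hL]
  exact_mod_cast (Rat.cast_le (K := ℝ)).2 h4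

/-- For `q ∈ [N, 2N]` there is a common modulus `D ≤ N^ε` such that all but a proportion `δ` of the
members of the progression `1 + D ℤ`, in any interval containing at least `√N` of them, are coprime to `q`.
Here `D` is the primorial of `y = ⌊(ε/2) log N⌋`: small primes cannot divide `1 + D m`, and `q` has
too few prime factors above `y` to matter. -/
theorem eventually_exists_progression {ε δ : ℝ} (hε : 0 < ε) (hδ : 0 < δ) :
    ∀ᶠ N : ℕ in atTop, ∃ D : ℕ, 1 ≤ D ∧ (D : ℝ) ≤ (N : ℝ) ^ ε ∧
      ∀ q : ℕ, N ≤ q → q ≤ 2 * N → ∀ a b : ℤ,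
        (N : ℝ) ^ (1 / 2 : ℝ) ≤ (Finset.Icc a b).card →
        (((Finset.Icc a b).filter (fun m : ℤ => ¬ IsCoprime (1 + D * m) (q : ℤ))).card : ℝ) ≤
          δ * (Finset.Icc a b).card := by
  have hlog : Tendsto (fun N : ℕ => Real.log N) atTop atTop :=
    Real.tendsto_log_atTop.comp tendsto_natCast_atTop_atTop
  have hy : Tendsto (fun N : ℕ => ((⌊ε / 2 * Real.log N⌋₊ : ℕ) : ℝ)) atTop atTop :=
    tendsto_natCast_atTop_atTop.comp
      (tendsto_nat_floor_atTop.comp (hlog.const_mul_atTop (by positivity)))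
  have e1 := (Real.tendsto_log_atTop.comp hy).eventually_ge_atTop 1
  have e2 := (Real.tendsto_log_atTop.comp hy).eventually_ge_atTop (16 / (ε * δ))
  have e3 := hlog.eventually_ge_atTop (4 / ε)
  have e4 : ∀ᶠ N : ℕ in atTop, Real.log N ≤ δ / 4 * (N : ℝ) ^ (1 / 2 : ℝ) := by
    have := (isLittleO_log_rpow_atTop (r := 1 / 2) (by norm_num)).bound (c := δ / 4) (by positivity)
    have := tendsto_natCast_atTop_atTop.eventually this
    filter_upwards [this, eventually_ge_atTop 1] with N h h1
    have h1 : (1 : ℝ) ≤ N := by exact_mod_cast h1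
    rwa [Real.norm_of_nonneg (Real.log_nonneg h1), Real.norm_of_nonneg (by positivity)] at h
  filter_upwards [e1, e2, e3, e4, eventually_ge_atTop 2] with N e1 e2 e3 e4 e5
  simp only [Function.comp_apply] at e1 e2
  set y := ⌊ε / 2 * Real.log N⌋₊ with hydef
  have hN2 : (2 : ℝ) ≤ N := by exact_mod_cast e5
  have hN0 : (0 : ℝ) < N := by linarith
  have hlogN : 0 < Real.log N := lt_of_lt_of_le (by positivity) e3
  have hyle : (y : ℝ) ≤ ε / 2 * Real.log N := Nat.floor_le (by positivity)
  have hyge : ε / 4 * Real.log N ≤ y := by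
    have h1 := Nat.lt_floor_add_one (ε / 2 * Real.log N)
    rw [div_le_iff₀ hε] at e3
    rw [← hydef] at h1
    nlinarith
  have hy0 : (0 : ℝ) < y := lt_of_lt_of_le (by positivity) hyge
  have hypos : 0 < y := by exact_mod_cast hy0
  refine ⟨primorial y, primorial_pos y, ?_, ?_⟩
  · have h1 : (primorial y : ℝ) ≤ 4 ^ y := by exact_mod_cast primorial_le_four_pow y
    refine h1.trans ?_
    rw [← Real.rpow_natCast, Real.rpow_def_of_pos (by norm_num), Real.rpow_def_of_pos hN0]
    refine Real.exp_le_exp.2 ?_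
    have h4 : Real.log 4 ≤ 2 := by
      have : (4 : ℝ) = 2 ^ 2 := by norm_num
      rw [this, Real.log_pow]; have := Real.log_two_lt_d9; push_cast; linarith
    nlinarith
  · intro q hq1 hq2 a b hL
    set L : ℝ := ((Finset.Icc a b).card : ℝ) with hLdef
    have hq0 : q ≠ 0 := by omega
    set Z := q.primeFactors.filter (fun ℓ => y < ℓ) with hZ
    -- the primes above `y` dividing `q` have product at most `q ≤ 2N`
    have hZcard : (Z.card : ℝ) * Real.log y ≤ 2 * Real.log N := by
      have h1 : y ^ Z.card ≤ 2 * N := by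
        calc y ^ Z.card ≤ ∏ ℓ ∈ Z, ℓ :=
              Finset.pow_card_le_prod _ _ _ fun ℓ hℓ => (Finset.mem_filter.1 hℓ).2.le
          _ ≤ ∏ ℓ ∈ q.primeFactors, ℓ := by
              refine Finset.prod_le_prod_of_subset_of_one_le' (Finset.filter_subset _ _) ?_
              intro ℓ hℓ _
              exact (Nat.prime_of_mem_primeFactors hℓ).one_le
          _ ≤ q := Nat.le_of_dvd (by omega) (Nat.prod_primeFactors_dvd q)
          _ ≤ _ := hq2
      have h2 : (y : ℝ) ^ Z.card ≤ 2 * N := by exact_mod_cast h1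
      have h3 := Real.log_le_log (by positivity) h2
      rw [Real.log_pow, Real.log_mul (by norm_num) hN0.ne'] at h3
      have h4 := Real.log_le_log (by norm_num) hN2
      linarith
    have hbad : (Finset.Icc a b).filter
        (fun m : ℤ => ¬ IsCoprime (1 + (primorial y : ℕ) * m) (q : ℤ)) ⊆
        Z.biUnion fun ℓ => (Finset.Icc a b).filter
          (fun m : ℤ => (ℓ : ℤ) ∣ 1 + (primorial y : ℕ) * m) := by
      intro m hm
      rw [Finset.mem_filter] at hm
      have hg := hm.2
      rw [Int.isCoprime_iff_gcd_eq_one] at hg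
      obtain ⟨ℓ, hℓ, hdvd⟩ := Nat.exists_prime_and_dvd hg
      have h1 : (ℓ : ℤ) ∣ 1 + (primorial y : ℕ) * m :=
        (Int.natCast_dvd_natCast.2 hdvd).trans (Int.gcd_dvd_left _ _)
      have h2 : (ℓ : ℤ) ∣ q := (Int.natCast_dvd_natCast.2 hdvd).trans (Int.gcd_dvd_right _ _)
      have h2 : ℓ ∣ q := Int.natCast_dvd_natCast.1 h2
      have h3 : y < ℓ := by
        by_contra hle
        have h4 : ℓ ∣ primorial y := by
          unfold primorial
          exact Finset.dvd_prod_of_mem _ (Finset.mem_filter.2 ⟨Finset.mem_range.2 (by omega), hℓ⟩)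
        have h5 : (ℓ : ℤ) ∣ (primorial y : ℕ) * m :=
          Dvd.dvd.mul_right (Int.natCast_dvd_natCast.2 h4) _
        have h6 : (ℓ : ℤ) ∣ 1 := (dvd_add_left h5).1 h1
        have h7 : ℓ ∣ 1 := by exact_mod_cast h6
        exact hℓ.one_lt.ne' (Nat.dvd_one.1 h7)
      rw [Finset.mem_biUnion]
      exact ⟨ℓ, Finset.mem_filter.2 ⟨Nat.mem_primeFactors.2 ⟨hℓ, h2, hq0⟩, h3⟩,
        Finset.mem_filter.2 ⟨hm.1, h1⟩⟩
    have hcount : (((Finset.Icc a b).filter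
        (fun m : ℤ => ¬ IsCoprime (1 + (primorial y : ℕ) * m) (q : ℤ))).card : ℝ) ≤
        Z.card * (L / y + 1) := by
      calc _ ≤ ((Z.biUnion fun ℓ => (Finset.Icc a b).filter
          (fun m : ℤ => (ℓ : ℤ) ∣ 1 + (primorial y : ℕ) * m)).card : ℝ) := by
            exact_mod_cast Finset.card_le_card hbad
        _ ≤ ∑ ℓ ∈ Z, (((Finset.Icc a b).filter
          (fun m : ℤ => (ℓ : ℤ) ∣ 1 + (primorial y : ℕ) * m)).card : ℝ) := by
            exact_mod_cast Finset.card_biUnion_le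
        _ ≤ ∑ ℓ ∈ Z, (L / y + 1) := by
            refine Finset.sum_le_sum fun ℓ hℓ => ?_
            rw [hZ, Finset.mem_filter] at hℓ
            have hp := Nat.prime_of_mem_primeFactors hℓ.1
            refine (card_dvd_le _ ℓ hp ?_ a b).trans ?_
            · intro hdvd
              have : ℓ ∈ (primorial y).primeFactors :=
                Nat.mem_primeFactors.2 ⟨hp, hdvd, primorial_ne_zero y⟩
              rw [primeFactors_primorial, Nat.mem_primesLE] at this
              omega
            · have : (y : ℝ) ≤ ℓ := by exact_mod_cast hℓ.2.le
              gcongr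
        _ = _ := by rw [Finset.sum_const, nsmul_eq_mul]
    refine hcount.trans ?_
    have hL0 : 0 ≤ L := by positivity
    have hz0 : (0 : ℝ) ≤ Z.card := by positivity
    have h1 : (Z.card : ℝ) ≤ δ / 2 * L := by nlinarith
    have h2 : (Z.card : ℝ) / y ≤ δ / 2 := by
      rw [div_le_iff₀ hy0]
      have h3 : (Z.card : ℝ) * (16 / (ε * δ)) ≤ 2 * Real.log N :=
        (mul_le_mul_of_nonneg_left e2 hz0).trans hZcard
      have h4 : (Z.card : ℝ) * 16 ≤ 2 * Real.log N * (ε * δ) := by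
        rw [← mul_div_assoc, div_le_iff₀ (by positivity)] at h3; exact h3
      nlinarith
    calc (Z.card : ℝ) * (L / y + 1) = Z.card / y * L + Z.card := by ring
      _ ≤ δ / 2 * L + δ / 2 * L := by gcongr
      _ = _ := by ring

/-! ### Rational points, shell balls and separation -/

/-- The rational point `p / q` attached to a pair `(p, q)`. -/
noncomputable def ratPt {n : ℕ} (c : (Fin n → ℤ) × ℕ) : Fin n → ℝ :=
  fun i => (c.1 i : ℝ) / (c.2 : ℝ)

/-- A closed ball of radius `q^{-τ}/4` inside the shell `q^{-τ}/4 ≤ |x - p/q| < q^{-τ}`. Staying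
away from `p/q` prevents the non-reduced fractions `kp/(kq)`, `k ≥ 2`, from being
`τ`-approximations. -/
noncomputable def shellBall {n : ℕ} (τ : ℝ) (c : (Fin n → ℤ) × ℕ) : Set (Fin n → ℝ) :=
  Metric.closedBall (fun i => ratPt c i + (c.2 : ℝ) ^ (-τ) / 2) ((c.2 : ℝ) ^ (-τ) / 4)

theorem shellBall_nonempty {n : ℕ} (τ : ℝ) (c : (Fin n → ℤ) × ℕ) : (shellBall τ c).Nonempty :=
  Metric.nonempty_closedBall.2 (by positivity)

theorem norm_sub_ratPt_le {n : ℕ} {τ : ℝ} {c : (Fin n → ℤ) × ℕ} {x : Fin n → ℝ}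
    (hx : x ∈ shellBall τ c) : ‖x - ratPt c‖ ≤ 3 / 4 * (c.2 : ℝ) ^ (-τ) := by
  have h0 : (0 : ℝ) ≤ (c.2 : ℝ) ^ (-τ) := by positivity
  rw [pi_norm_le_iff_of_nonneg (by positivity)]
  intro i
  rw [shellBall, Metric.mem_closedBall, dist_pi_le_iff (by positivity)] at hx
  have := hx i
  rw [Real.dist_eq, abs_le] at this
  rw [Pi.sub_apply, Real.norm_eq_abs, abs_le]
  constructor <;> linarith [this.1, this.2]

theorem le_norm_sub_ratPt {n : ℕ} (i0 : Fin n) {τ : ℝ} {c : (Fin n → ℤ) × ℕ} {x : Fin n → ℝ}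
    (hx : x ∈ shellBall τ c) : 1 / 4 * (c.2 : ℝ) ^ (-τ) ≤ ‖x - ratPt c‖ := by
  have h0 : (0 : ℝ) ≤ (c.2 : ℝ) ^ (-τ) := by positivity
  refine le_trans ?_ (norm_le_pi_norm _ i0)
  rw [shellBall, Metric.mem_closedBall, dist_pi_le_iff (by positivity)] at hx
  have := hx i0
  rw [Real.dist_eq, abs_le] at this
  rw [Pi.sub_apply, Real.norm_eq_abs]
  exact le_trans (by linarith [this.1]) (le_abs_self _)

theorem ratPt_sep {n : ℕ} {c c' : (Fin n → ℤ) × ℕ} (hc : 0 < c.2) (hc' : 0 < c'.2)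
    (hne : ratPt c ≠ ratPt c') : 1 / ((c.2 : ℝ) * c'.2) ≤ ‖ratPt c - ratPt c'‖ := by
  obtain ⟨i, hi⟩ := Function.ne_iff.1 hne
  refine le_trans ?_ (norm_le_pi_norm _ i)
  have h1 : (0 : ℝ) < c.2 := by exact_mod_cast hc
  have h2 : (0 : ℝ) < c'.2 := by exact_mod_cast hc'
  have heq : ratPt c i - ratPt c' i =
      ((c.1 i * c'.2 - c.2 * c'.1 i : ℤ) : ℝ) / ((c.2 : ℝ) * c'.2) := by
    simp only [ratPt]; rw [div_sub_div _ _ h1.ne' h2.ne']; push_cast; rfl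
  have hz : (c.1 i * c'.2 - c.2 * c'.1 i : ℤ) ≠ 0 := by
    intro h
    apply hi
    rw [← sub_eq_zero, heq, h]; simp
  have h3 : (1 : ℝ) ≤ |((c.1 i * c'.2 - c.2 * c'.1 i : ℤ) : ℝ)| := by
    rw [← Int.cast_abs]; exact_mod_cast Int.one_le_abs hz
  rw [Pi.sub_apply, heq, Real.norm_eq_abs, abs_div, abs_of_pos (mul_pos h1 h2)]
  gcongr

/-- If `p/q` is reduced in the coordinate `i0`, its denominator divides that of any other
representation. -/
theorem dvd_of_ratPt_eq {n : ℕ} {i0 : Fin n} {c c' : (Fin n → ℤ) × ℕ} (hc : 0 < c.2)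
    (hc' : 0 < c'.2) (hco : IsCoprime (c.1 i0) (c.2 : ℤ)) (h : ratPt c = ratPt c') :
    c.2 ∣ c'.2 := by
  have h0 := congrFun h i0
  have h1 : (c.2 : ℝ) ≠ 0 := by exact_mod_cast hc.ne'
  have h2 : (c'.2 : ℝ) ≠ 0 := by exact_mod_cast hc'.ne'
  simp only [ratPt] at h0
  rw [div_eq_div_iff h1 h2] at h0
  have h3 : c.1 i0 * c'.2 = c'.1 i0 * c.2 := by exact_mod_cast h0
  have h4 : (c.2 : ℤ) ∣ c.1 i0 * c'.2 := h3 ▸ Dvd.intro_left _ rfl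
  exact Int.natCast_dvd_natCast.1 (hco.symm.dvd_of_dvd_mul_left h4)

theorem ratPt_inj {n : ℕ} {i0 : Fin n} {c c' : (Fin n → ℤ) × ℕ} (hc : 0 < c.2)
    (hc' : 0 < c'.2) (hco : IsCoprime (c.1 i0) (c.2 : ℤ)) (hco' : IsCoprime (c'.1 i0) (c'.2 : ℤ))
    (h : ratPt c = ratPt c') : c = c' := by
  have h2 : c.2 = c'.2 := Nat.dvd_antisymm (dvd_of_ratPt_eq hc hc' hco h)
    (dvd_of_ratPt_eq hc' hc hco' h.symm)
  refine Prod.ext (funext fun i => ?_) h2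
  have h0 := congrFun h i
  have h1 : (c'.2 : ℝ) ≠ 0 := by exact_mod_cast hc'.ne'
  simp only [ratPt, h2] at h0
  rw [div_left_inj' h1] at h0
  exact_mod_cast h0

theorem eventually_mul_rpow_le (C : ℝ) {θ η : ℝ} (hθ : θ < 0) (hη : 0 < η) :
    ∀ᶠ N : ℕ in atTop, C * (N : ℝ) ^ θ ≤ η := by
  have h := (tendsto_rpow_neg_atTop (y := -θ) (by linarith)).comp
    (tendsto_natCast_atTop_atTop (R := ℝ))
  have h2 := h.const_mul C
  rw [mul_zero] at h2
  filter_upwards [h2.eventually (ge_mem_nhds hη)] with N hN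
  simpa using hN

theorem sum_inv_sq_le {A : ℝ} (hA : 0 < A) (S : Finset ℕ) (hS : ∀ q ∈ S, A ≤ q) :
    ∑ q ∈ S, (q : ℝ) ^ (-2 : ℝ) ≤ 2 / A := by
  have hA1 : 0 < ⌈A⌉₊ := Nat.ceil_pos.2 hA
  obtain ⟨M, hM⟩ := S.bddAbove
  calc ∑ q ∈ S, (q : ℝ) ^ (-2 : ℝ) ≤ ∑ q ∈ Finset.Ioo (⌈A⌉₊ - 1) (M + 1), (q : ℝ) ^ (-2 : ℝ) := by
        refine Finset.sum_le_sum_of_subset_of_nonneg ?_ (fun _ _ _ => by positivity)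
        intro q hq
        have h1 := Nat.ceil_le.2 (hS q hq)
        have h2 := hM hq
        rw [Finset.mem_Ioo]; omega
    _ = ∑ q ∈ Finset.Ioo (⌈A⌉₊ - 1) (M + 1), ((q : ℝ) ^ 2)⁻¹ := by
        refine Finset.sum_congr rfl fun q _ => ?_
        rw [Real.rpow_neg (by positivity)]; norm_cast
    _ ≤ 2 / (((⌈A⌉₊ - 1 : ℕ) : ℝ) + 1) := sum_Ioo_inv_sq_le _ _
    _ ≤ 2 / A := by
        gcongr
        have := Nat.le_ceil A
        have h2 : ((⌈A⌉₊ - 1 : ℕ) : ℝ) + 1 = ⌈A⌉₊ := by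
          rw [Nat.cast_sub hA1]; simp
        rw [h2]; exact this

theorem add_add_pow_le {a b c : ℝ} (ha : 0 ≤ a) (hb : 0 ≤ b) (hc : 0 ≤ c) (n : ℕ) :
    (a + b + c) ^ n ≤ 3 ^ n * (a ^ n + b ^ n + c ^ n) := by
  have hm : ∀ m : ℝ, 0 ≤ m → a ≤ m → b ≤ m → c ≤ m → (a + b + c) ^ n ≤ 3 ^ n * m ^ n := by
    intro m _ h1 h2 h3
    rw [← mul_pow]
    exact pow_le_pow_left₀ (by positivity) (by linarith) n
  have pa : 0 ≤ a ^ n := by positivity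
  have pb : 0 ≤ b ^ n := by positivity
  have pc : 0 ≤ c ^ n := by positivity
  rcases le_total a b with h1 | h1 <;> rcases le_total b c with h2 | h2 <;>
    rcases le_total a c with h3 | h3
  · exact (hm c hc h3 h2 le_rfl).trans (by gcongr; linarith)
  · exact (hm c hc (h1.trans h2) h2 le_rfl).trans (by gcongr; linarith)
  · exact (hm b hb h1 le_rfl h2).trans (by gcongr; linarith)
  · exact (hm b hb h1 le_rfl h2).trans (by gcongr; linarith)
  · exact (hm c hc h3 h2 le_rfl).trans (by gcongr; linarith)
  · exact (hm a ha le_rfl h1 h3).trans (by gcongr; linarith)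
  · exact (hm a ha le_rfl h1 (h2.trans h1)).trans (by gcongr; linarith)
  · exact (hm a ha le_rfl h1 h3).trans (by gcongr; linarith)

/-- Rationals of denominator `≥ N0^{τ-1}/2` whose approximation balls meet a ball of radius
`R ≍ N0^{-τ}` occupy a small proportion of it, counting `O((R q + 1)^n)` of them for each
denominator `q`. -/
theorem eventually_small_sums {n : ℕ} (hn : 1 ≤ n) {τ : ℝ} (hτ : 2 + 1 / (n : ℝ) < τ) :
    ∀ᶠ N0 : ℕ in atTop, 1 ≤ (N0 : ℝ) ^ (τ - 1) / 2 ∧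
      2 * ((N0 : ℝ) ^ (τ - 1) / 2) ^ (-τ) ≤ (2 : ℝ) ^ (-τ) * (N0 : ℝ) ^ (-τ) / 4 ∧
      ∀ R : ℝ, (2 : ℝ) ^ (-τ) * (N0 : ℝ) ^ (-τ) / 4 ≤ R →
      ∀ S : Finset ℕ, (∀ q ∈ S, (N0 : ℝ) ^ (τ - 1) / 2 ≤ q) →
        ∑ q ∈ S, 3 ^ n * ((32 * (q : ℝ) ^ (1 - τ)) ^ n + (8 * (q : ℝ) ^ (-τ) / R) ^ n) ≤ 1 / 8 := by
  have hn0 : (1 : ℝ) ≤ n := by exact_mod_cast hn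
  have hnτ : 2 * n + 1 < n * τ := by
    have := mul_lt_mul_of_pos_left hτ (by linarith : (0 : ℝ) < n)
    rw [mul_add, mul_one_div_cancel (by linarith)] at this
    linarith
  have hτ2 : 2 < τ := by
    have : (0 : ℝ) < 1 / n := by positivity
    linarith
  have hexp : τ * n + (τ - 1) * (1 - τ * n) < 0 := by nlinarith
  have e1 := eventually_mul_rpow_le (2 ^ τ * 2 * 4 * 2 ^ τ) (θ := -(τ - 1) * τ + τ) (η := 1)
    (by nlinarith) one_pos
  have e2 := eventually_mul_rpow_le (3 ^ n * 32 ^ n * 2 * 2) (θ := -(τ - 1)) (η := 1 / 16)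
    (by linarith) (by norm_num)
  have e3 := eventually_mul_rpow_le (3 ^ n * 8 ^ n * 2 * ((4 * 2 ^ τ) ^ n * 2 ^ (τ * n - 1)))
    hexp (η := 1 / 16) (by norm_num)
  have e4 := eventually_mul_rpow_le 2 (θ := -(τ - 1)) (η := 1)
    (by linarith) (by norm_num)
  filter_upwards [e1, e2, e3, e4, eventually_ge_atTop 1] with N0 e1 e2 e3 e4 e5
  have hN : (1 : ℝ) ≤ N0 := by exact_mod_cast e5
  have hN0 : (0 : ℝ) < N0 := by linarith
  set A := (N0 : ℝ) ^ (τ - 1) / 2 with hA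
  have hA0 : 0 < A := by positivity
  have hA1 : 1 ≤ A := by
    rw [Real.rpow_neg hN0.le, ← div_eq_mul_inv, div_le_one (by positivity)] at e4
    rw [hA]; linarith
  have hNτ : (N0 : ℝ) ^ (-τ) * (N0 : ℝ) ^ τ = 1 := by
    rw [← Real.rpow_add hN0]; simp
  have h2τ : (2 : ℝ) ^ (-τ) * (2 : ℝ) ^ τ = 1 := by
    rw [← Real.rpow_add (by norm_num)]; simp
  refine ⟨hA1, ?_, ?_⟩
  · have h1 : A ^ (-τ) = 2 ^ τ * (N0 : ℝ) ^ (-(τ - 1) * τ) := by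
      rw [hA, Real.div_rpow (by positivity) (by norm_num), ← Real.rpow_mul hN0.le,
        Real.rpow_neg (by norm_num : (0 : ℝ) ≤ 2), div_inv_eq_mul, mul_comm]
      congr 2; ring
    rw [Real.rpow_add hN0] at e1
    have hp : 0 < (2 : ℝ) ^ (-τ) * (N0 : ℝ) ^ (-τ) / 4 := by positivity
    calc 2 * A ^ (-τ) = (2 ^ τ * 2 * 4 * 2 ^ τ * ((N0 : ℝ) ^ (-(τ - 1) * τ) * (N0 : ℝ) ^ τ)) *
          ((2 : ℝ) ^ (-τ) * (N0 : ℝ) ^ (-τ) / 4) := by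
          rw [h1]
          linear_combination (-(2 : ℝ) * 2 ^ τ * (N0 : ℝ) ^ (-(τ - 1) * τ) *
            ((N0 : ℝ) ^ (-τ) * (N0 : ℝ) ^ τ)) * h2τ -
            (2 : ℝ) * 2 ^ τ * (N0 : ℝ) ^ (-(τ - 1) * τ) * hNτ
      _ ≤ 1 * ((2 : ℝ) ^ (-τ) * (N0 : ℝ) ^ (-τ) / 4) := by gcongr
      _ = _ := one_mul _
  · intro R hR S hS
    have hR0 : 0 < R := lt_of_lt_of_le (by positivity) hR
    have hRinv : R⁻¹ ≤ 4 * 2 ^ τ * (N0 : ℝ) ^ τ := by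
      rw [inv_le_comm₀ hR0 (by positivity)]
      refine le_trans (le_of_eq ?_) hR
      rw [Real.rpow_neg (by norm_num), Real.rpow_neg hN0.le, mul_inv, mul_inv]
      ring
    have hterm : ∀ q ∈ S, 3 ^ n * ((32 * (q : ℝ) ^ (1 - τ)) ^ n + (8 * (q : ℝ) ^ (-τ) / R) ^ n) ≤
        3 ^ n * (32 ^ n + 8 ^ n * (R⁻¹) ^ n * A ^ (2 - τ * n)) * (q : ℝ) ^ (-2 : ℝ) := by
      intro q hq
      have hqA := hS q hq
      have hq1 : (1 : ℝ) ≤ q := hA1.trans hqA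
      have hq0 : (0 : ℝ) < q := by linarith
      have h1 : ((q : ℝ) ^ (1 - τ)) ^ n ≤ (q : ℝ) ^ (-2 : ℝ) := by
        rw [← Real.rpow_natCast, ← Real.rpow_mul hq0.le]
        exact Real.rpow_le_rpow_of_exponent_le hq1 (by nlinarith)
      have h2 : ((q : ℝ) ^ (-τ)) ^ n ≤ A ^ (2 - τ * n) * (q : ℝ) ^ (-2 : ℝ) := by
        rw [← Real.rpow_natCast, ← Real.rpow_mul hq0.le]
        calc (q : ℝ) ^ (-τ * n) = (q : ℝ) ^ (2 - τ * n) * (q : ℝ) ^ (-2 : ℝ) := by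
              rw [← Real.rpow_add hq0]; congr 1; ring
          _ ≤ _ := by
              gcongr ?_ * _
              exact Real.rpow_le_rpow_of_nonpos hA0 hqA (by nlinarith)
      calc _ = 3 ^ n * (32 ^ n * ((q : ℝ) ^ (1 - τ)) ^ n +
            8 ^ n * (R⁻¹) ^ n * ((q : ℝ) ^ (-τ)) ^ n) := by
            rw [div_eq_mul_inv, mul_pow, mul_pow, mul_pow]; ring
        _ ≤ 3 ^ n * (32 ^ n * (q : ℝ) ^ (-2 : ℝ) +
            8 ^ n * (R⁻¹) ^ n * (A ^ (2 - τ * n) * (q : ℝ) ^ (-2 : ℝ))) := by gcongr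
        _ = _ := by ring
    have hAr : A ^ (2 - τ * n) / A = 2 ^ (τ * n - 1) * (N0 : ℝ) ^ ((τ - 1) * (1 - τ * n)) := by
      have : A ^ (2 - τ * n) / A = A ^ (1 - τ * n) := by
        rw [div_eq_iff hA0.ne', ← Real.rpow_add_one hA0.ne']; congr 1; ring
      rw [this, hA, Real.div_rpow (by positivity) (by norm_num), ← Real.rpow_mul hN0.le,
        show 1 - τ * n = -(τ * n - 1) by ring, Real.rpow_neg (by norm_num : (0 : ℝ) ≤ 2),
        div_inv_eq_mul, mul_comm]
    calc _ ≤ ∑ q ∈ S, 3 ^ n * (32 ^ n + 8 ^ n * (R⁻¹) ^ n * A ^ (2 - τ * n)) * (q : ℝ) ^ (-2 : ℝ) :=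
          Finset.sum_le_sum hterm
      _ = 3 ^ n * (32 ^ n + 8 ^ n * (R⁻¹) ^ n * A ^ (2 - τ * n)) * ∑ q ∈ S, (q : ℝ) ^ (-2 : ℝ) := by
          rw [Finset.mul_sum]
      _ ≤ 3 ^ n * (32 ^ n + 8 ^ n * (R⁻¹) ^ n * A ^ (2 - τ * n)) * (2 / A) := by
          gcongr; exact sum_inv_sq_le hA0 S hS
      _ = 3 ^ n * 32 ^ n * 2 * A⁻¹ + 3 ^ n * 8 ^ n * 2 * ((R⁻¹) ^ n * (A ^ (2 - τ * n) / A)) := by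
          ring
      _ ≤ 3 ^ n * 32 ^ n * 2 * A⁻¹ + 3 ^ n * 8 ^ n * 2 * ((4 * 2 ^ τ * (N0 : ℝ) ^ τ) ^ n *
            (A ^ (2 - τ * n) / A)) := by gcongr
      _ = 3 ^ n * 32 ^ n * 2 * 2 * (N0 : ℝ) ^ (-(τ - 1)) +
            3 ^ n * 8 ^ n * 2 * ((4 * 2 ^ τ) ^ n * 2 ^ (τ * n - 1)) *
              (N0 : ℝ) ^ (τ * n + (τ - 1) * (1 - τ * n)) := by
          rw [hAr, Real.rpow_add hN0, Real.rpow_mul hN0.le τ, Real.rpow_natCast, hA, inv_div,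
            Real.rpow_neg hN0.le]
          ring
      _ ≤ 1 / 16 + 1 / 16 := add_le_add e2 e3
      _ = 1 / 8 := by norm_num

/-! ### Counting rational points that avoid small denominators -/

theorem card_piFinset_filter_le {n : ℕ} (i0 : Fin n) (I : Fin n → Finset ℤ) (P : ℤ → Prop)
    [DecidablePred P] {δ : ℝ} (h : (((I i0).filter P).card : ℝ) ≤ δ * (I i0).card) :
    (((Fintype.piFinset I).filter (fun m => P (m i0))).card : ℝ) ≤
      δ * (Fintype.piFinset I).card := by
  have hsub : (Fintype.piFinset I).filter (fun m => P (m i0)) ⊆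
      Fintype.piFinset (Function.update I i0 ((I i0).filter P)) := by
    intro m hm
    rw [Finset.mem_filter, Fintype.mem_piFinset] at hm
    rw [Fintype.mem_piFinset]
    intro i
    rcases eq_or_ne i i0 with rfl | hi
    · simp [hm.1 i, hm.2]
    · simp [Function.update_of_ne hi, hm.1 i]
  have h1 := Finset.card_le_card hsub
  have h2 : (Fintype.piFinset (Function.update I i0 ((I i0).filter P))).card =
      ((I i0).filter P).card * ∏ i ∈ Finset.univ.erase i0, (I i).card := by
    rw [Fintype.card_piFinset, ← Finset.mul_prod_erase _ _ (Finset.mem_univ i0)]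
    rw [Function.update_self]
    congr 1
    refine Finset.prod_congr rfl fun i hi => ?_
    rw [Function.update_of_ne (Finset.ne_of_mem_erase hi)]
  have h3 : (Fintype.piFinset I).card =
      (I i0).card * ∏ i ∈ Finset.univ.erase i0, (I i).card := by
    rw [Fintype.card_piFinset, ← Finset.mul_prod_erase _ _ (Finset.mem_univ i0)]
  generalize ∏ i ∈ Finset.univ.erase i0, (I i).card = X at h2 h3
  rw [h2] at h1
  have h4 : (((Fintype.piFinset I).filter (fun m => P (m i0))).card : ℝ) ≤
      ((I i0).filter P).card * X := by exact_mod_cast h1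
  have h5 : ((Fintype.piFinset I).card : ℝ) = (I i0).card * X := by exact_mod_cast h3
  rw [h5, ← mul_assoc]
  exact h4.trans (by gcongr)

/-- In a box of side `≍ R` around `z0`, at most `(4Rq'+1)^n (2qa/D+1)^n` of the points `(1+Dm)/q`
lie within `a ≤ R` of a rational point of denominator `q'`. -/
theorem close_count {n : ℕ} {q D q' : ℕ} (hq : 0 < q) (hD : 0 < D) (hq' : 0 < q')
    (z0 : Fin n → ℝ) {R a : ℝ} (ha : 0 ≤ a) (haR : a ≤ R) (B : Finset (Fin n → ℤ))
    (hB : ∀ m ∈ B, ∀ i, |((1 + D * m i : ℤ) : ℝ) - q * z0 i| ≤ q * R / 2)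
    (hB' : ∀ m ∈ B, ∃ p : Fin n → ℤ, ‖ratPt (p, q') - ratPt (fun i => 1 + D * m i, q)‖ ≤ a) :
    (B.card : ℝ) ≤ (4 * R * q' + 1) ^ n * (2 * q * a / D + 1) ^ n := by
  classical
  have hq0 : (0 : ℝ) < q := by exact_mod_cast hq
  have hq0' : (0 : ℝ) < q' := by exact_mod_cast hq'
  have hD0 : (0 : ℝ) < D := by exact_mod_cast hD
  have hR : 0 ≤ R := ha.trans haR
  choose! p hp using hB'
  have hp' : ∀ m ∈ B, ∀ i, |(p m i : ℝ) / q' - ((1 + D * m i : ℤ) : ℝ) / q| ≤ a := by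
    intro m hm i
    exact (norm_le_pi_norm (ratPt (p m, q') - ratPt (fun i => 1 + D * m i, q)) i).trans (hp m hm)
  have himg : ((B.image p).card : ℝ) ≤ (4 * R * q' + 1) ^ n := by
    have := card_box_le (B.image p) (fun i => q' * z0 i) (2 * R * q') (by positivity) ?_
    · convert this using 2; ring
    · intro v hv i
      obtain ⟨m, hm, rfl⟩ := Finset.mem_image.1 hv
      have h1 := abs_le.1 (hp' m hm i)
      have h2 := abs_le.1 (hB m hm i)
      have h3 : |(p m i : ℝ) / q' - z0 i| ≤ 2 * R := by
        have h4 : |((1 + D * m i : ℤ) : ℝ) / q - z0 i| ≤ R / 2 := by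
          have : ((1 + D * m i : ℤ) : ℝ) / q - z0 i = (((1 + D * m i : ℤ) : ℝ) - q * z0 i) / q := by
            field_simp
          rw [this, abs_div, abs_of_pos hq0, div_le_iff₀ hq0]
          linarith [hB m hm i]
        have h5 := abs_le.1 h4
        rw [abs_le]
        constructor <;> linarith [h1.1, h1.2, h5.1, h5.2]
      have h6 : (p m i : ℝ) - q' * z0 i = ((p m i : ℝ) / q' - z0 i) * q' := by field_simp
      rw [h6, abs_mul, abs_of_pos hq0']
      gcongr
  have hfib : ∀ v ∈ B.image p, ((B.filter (fun m => p m = v)).card : ℝ) ≤ (2 * q * a / D + 1) ^ n := by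
    intro v _
    have := card_box_le (B.filter (fun m => p m = v)) (fun i => (q * (v i / q') - 1) / D) (q * a / D)
      (by positivity) ?_
    · convert this using 2; ring
    · intro m hm i
      obtain ⟨hmB, rfl⟩ := Finset.mem_filter.1 hm
      have h1 := hp' m hmB i
      have h2 : (m i : ℝ) - (q * (p m i / q') - 1) / D =
          ((p m i : ℝ) / q' - ((1 + D * m i : ℤ) : ℝ) / q) * (-(q / D)) := by
        push_cast
        field_simp
        ring
      rw [h2, abs_mul, abs_neg, abs_of_pos (by positivity : (0 : ℝ) < q / D), mul_comm]
      calc (q : ℝ) / D * _ ≤ q / D * a := by gcongr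
        _ = _ := by ring
  calc (B.card : ℝ) = ∑ v ∈ B.image p, ((B.filter (fun m => p m = v)).card : ℝ) := by
        rw [Finset.card_eq_sum_card_image p B]; push_cast; rfl
    _ ≤ ∑ v ∈ B.image p, (2 * q * a / D + 1) ^ n := Finset.sum_le_sum hfib
    _ = (B.image p).card * (2 * q * a / D + 1) ^ n := by rw [Finset.sum_const, nsmul_eq_mul]
    _ ≤ _ := by gcongr

/-- Among the points `(1+Dm)/q` in a box around `z0`, at least a fixed proportion is reduced in
the coordinate `i0` and avoids the balls `B(p'/q', 2q'^{-τ})` with `q'` in a set `S` of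
denominators satisfying the summability condition `hsum`. -/
theorem good_count {n : ℕ} (i0 : Fin n) {τ : ℝ} {q D : ℕ} (hq : 0 < q) (hD : 0 < D)
    (z0 : Fin n → ℝ) {R t : ℝ} (hR : 0 < R) (ht : t = q * R / (2 * D)) (ht1 : 1 ≤ t)
    (hprog : ∀ a b : ℤ, t ≤ (Finset.Icc a b).card →
      (((Finset.Icc a b).filter (fun m : ℤ => ¬ IsCoprime (1 + D * m) (q : ℤ))).card : ℝ) ≤
          1 / 4 * (Finset.Icc a b).card)
    (S : Finset ℕ) (hS : ∀ q' ∈ S, 0 < q' ∧ 2 * (q' : ℝ) ^ (-τ) ≤ R)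
    (hsum : ∑ q' ∈ S, ((4 * R * q' + 1) * (8 * (q' : ℝ) ^ (-τ) / R + 1 / t)) ^ n ≤ 1 / 4) :
    ∃ G : Finset (Fin n → ℤ), t ^ n / 2 ≤ G.card ∧
      (∀ m ∈ G, (∀ i, |((1 + D * m i : ℤ) : ℝ) - q * z0 i| ≤ q * R / 2) ∧
        IsCoprime (1 + D * m i0) (q : ℤ) ∧
        ∀ p : Fin n → ℤ, ∀ q' ∈ S,
          2 * (q' : ℝ) ^ (-τ) < ‖ratPt (p, q') - ratPt (fun i => 1 + D * m i, q)‖) := by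
  classical
  have hq0 : (0 : ℝ) < q := by exact_mod_cast hq
  have hD0 : (0 : ℝ) < D := by exact_mod_cast hD
  have ht0 : 0 < t := by linarith
  set ζ : Fin n → ℝ := fun i => (q * z0 i - 1) / D with hζ
  set I : Fin n → Finset ℤ := fun i => Finset.Icc ⌈ζ i - t⌉ ⌊ζ i + t⌋ with hI
  set Box := Fintype.piFinset I with hBox
  have hIcard : ∀ i, t ≤ ((I i).card : ℝ) := by
    intro i
    have := le_card_Icc (ζ i) t
    simp only [hI]; linarith
  have hboxm : ∀ m ∈ Box, ∀ i, |((1 + D * m i : ℤ) : ℝ) - q * z0 i| ≤ q * R / 2 := by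
    intro m hm i
    have h1 := Fintype.mem_piFinset.1 hm i
    simp only [hI, Finset.mem_Icc, Int.ceil_le, Int.le_floor] at h1
    have h2 : |(m i : ℝ) - ζ i| ≤ t := by rw [abs_le]; constructor <;> linarith [h1.1, h1.2]
    have h3 : ((1 + D * m i : ℤ) : ℝ) - q * z0 i = D * ((m i : ℝ) - ζ i) := by
      simp only [hζ]; push_cast; field_simp; ring
    rw [h3, abs_mul, abs_of_pos hD0]
    calc (D : ℝ) * _ ≤ D * t := by gcongr
      _ = _ := by rw [ht]; field_simp
  have hcard : t ^ n ≤ (Box.card : ℝ) := by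
    rw [hBox, Fintype.card_piFinset]
    push_cast
    calc t ^ n = ∏ _i : Fin n, t := by simp
      _ ≤ _ := Finset.prod_le_prod (fun _ _ => ht0.le) (fun i _ => hIcard i)
  -- discard the non-reduced points, then those close to a rational of denominator in `S`
  set B1 := Box.filter (fun m : Fin n → ℤ => ¬ IsCoprime (1 + (D : ℤ) * m i0) (q : ℤ)) with hB1
  have hB1c : (B1.card : ℝ) ≤ 1 / 4 * Box.card :=
    card_piFinset_filter_le i0 I (fun m => ¬ IsCoprime (1 + (D : ℤ) * m) (q : ℤ))
      (hprog _ _ (hIcard i0))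
  set B2 : ℕ → Finset (Fin n → ℤ) := fun q' => Box.filter (fun m => ∃ p : Fin n → ℤ,
    ‖ratPt (p, q') - ratPt (fun i => 1 + D * m i, q)‖ ≤ 2 * (q' : ℝ) ^ (-τ)) with hB2
  have hB2c : ∀ q' ∈ S, ((B2 q').card : ℝ) ≤
      ((4 * R * q' + 1) * (8 * (q' : ℝ) ^ (-τ) / R + 1 / t)) ^ n * t ^ n := by
    intro q' hq'
    have := close_count hq hD (hS q' hq').1 z0 (a := 2 * (q' : ℝ) ^ (-τ)) (by positivity)
      (hS q' hq').2 (B2 q') (fun m hm => hboxm m (Finset.mem_filter.1 hm).1)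
      (fun m hm => (Finset.mem_filter.1 hm).2)
    refine this.trans (le_of_eq ?_)
    have h2 : (8 * (q' : ℝ) ^ (-τ) / R + 1 / t) * t = 2 * q * (2 * (q' : ℝ) ^ (-τ)) / D + 1 := by
      rw [add_mul, one_div_mul_cancel ht0.ne', ht]
      field_simp
      ring
    rw [← h2, ← mul_pow, ← mul_pow, ← mul_assoc]
  set U := S.biUnion B2 with hU
  have hUc : (U.card : ℝ) ≤ 1 / 4 * t ^ n := by
    calc (U.card : ℝ) ≤ ∑ q' ∈ S, ((B2 q').card : ℝ) := by
          exact_mod_cast Finset.card_biUnion_le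
      _ ≤ ∑ q' ∈ S, ((4 * R * q' + 1) * (8 * (q' : ℝ) ^ (-τ) / R + 1 / t)) ^ n * t ^ n :=
          Finset.sum_le_sum hB2c
      _ ≤ _ := by rw [← Finset.sum_mul]; gcongr
  refine ⟨Box \ (B1 ∪ U), ?_, ?_⟩
  · have h1 : Box.card ≤ (Box \ (B1 ∪ U)).card + (B1 ∪ U).card := by
      have := Finset.le_card_sdiff (B1 ∪ U) Box
      omega
    have h2 := Finset.card_union_le B1 U
    have h3 : (Box.card : ℝ) ≤ (Box \ (B1 ∪ U)).card + (B1.card + U.card) := by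
      exact_mod_cast h1.trans (by omega)
    linarith
  · intro m hm
    rw [Finset.mem_sdiff, Finset.mem_union, not_or] at hm
    obtain ⟨hm, hm1, hm2⟩ := hm
    refine ⟨hboxm m hm, ?_, ?_⟩
    · by_contra hc
      exact hm1 (Finset.mem_filter.2 ⟨hm, hc⟩)
    · intro p q' hq'
      by_contra hc
      exact hm2 (Finset.mem_biUnion.2 ⟨q', hq', Finset.mem_filter.2 ⟨hm, p, not_lt.1 hc⟩⟩)

/-- Contribution to `good_count` of the additive constants in the lattice point counts. -/
theorem eventually_third_sum {n : ℕ} {τ ε : ℝ} (hτ : 1 < τ)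
    (hε : (n + 1) / (τ - 1) < (1 - ε) * n) (R : ℝ) (hR : 0 < R) :
    ∀ᶠ N : ℕ in atTop, ∀ t : ℝ, (N : ℝ) ^ (1 - ε) * R / 2 ≤ t → ∀ S : Finset ℕ,
      (∀ q ∈ S, 0 < q ∧ (q : ℝ) ^ (τ - 1) ≤ 4 * N) →
      ∑ q ∈ S, 3 ^ n * ((4 * R + 1) * q / t) ^ n ≤ 1 / 8 := by
  have hτ1 : 0 < τ - 1 := by linarith
  have e1 := eventually_mul_rpow_le
    (3 ^ n * ((4 * R + 1) * (2 / R)) ^ n * 4 ^ ((n + 1) / (τ - 1)))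
    (θ := (n + 1) / (τ - 1) - (1 - ε) * n) (by linarith) (η := 1 / 8) (by norm_num)
  filter_upwards [e1, eventually_ge_atTop 1] with N e1 hN1 t ht S hS
  have hN : (1 : ℝ) ≤ N := by exact_mod_cast hN1
  have hN0 : (0 : ℝ) < N := by linarith
  have ht0 : 0 < t := lt_of_lt_of_le (by positivity) ht
  set b := (4 * (N : ℝ)) ^ (1 / (τ - 1)) with hb
  have hb0 : 0 ≤ b := by positivity
  have hqb : ∀ q ∈ S, (q : ℝ) ≤ b := by
    intro q hq
    rw [hb]
    calc (q : ℝ) = ((q : ℝ) ^ (τ - 1)) ^ (1 / (τ - 1)) := by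
          rw [← Real.rpow_mul (by positivity), mul_one_div_cancel hτ1.ne', Real.rpow_one]
      _ ≤ _ := by gcongr; exact (hS q hq).2
  have hcard : (S.card : ℝ) ≤ b := by
    have : S ⊆ Finset.Icc 1 ⌊b⌋₊ := by
      intro q hq
      rw [Finset.mem_Icc]
      exact ⟨(hS q hq).1, Nat.le_floor (hqb q hq)⟩
    have h2 := Finset.card_le_card this
    rw [Nat.card_Icc, Nat.add_sub_cancel] at h2
    exact le_trans (by exact_mod_cast h2) (Nat.floor_le hb0)
  have hti : 1 / t ≤ 2 / R * (N : ℝ) ^ (-(1 - ε)) := by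
    rw [Real.rpow_neg hN0.le, div_le_iff₀ ht0]
    calc (1 : ℝ) = 2 / R * ((N : ℝ) ^ (1 - ε))⁻¹ * ((N : ℝ) ^ (1 - ε) * R / 2) := by
          have : (N : ℝ) ^ (1 - ε) ≠ 0 := by positivity
          field_simp
      _ ≤ _ := by gcongr
  calc ∑ q ∈ S, 3 ^ n * ((4 * R + 1) * q / t) ^ n
      ≤ ∑ q ∈ S, 3 ^ n * ((4 * R + 1) * b * (2 / R * (N : ℝ) ^ (-(1 - ε)))) ^ n := by
        refine Finset.sum_le_sum fun q hq => ?_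
        rw [div_eq_mul_one_div]
        gcongr
        exact hqb q hq
    _ = S.card * (3 ^ n * ((4 * R + 1) * b * (2 / R * (N : ℝ) ^ (-(1 - ε)))) ^ n) := by
        rw [Finset.sum_const, nsmul_eq_mul]
    _ ≤ b * (3 ^ n * ((4 * R + 1) * b * (2 / R * (N : ℝ) ^ (-(1 - ε)))) ^ n) := by gcongr
    _ = 3 ^ n * ((4 * R + 1) * (2 / R)) ^ n * (b ^ n * b) * ((N : ℝ) ^ (-(1 - ε))) ^ n := by
        rw [mul_pow, mul_pow, mul_pow, mul_pow]; ring
    _ = 3 ^ n * ((4 * R + 1) * (2 / R)) ^ n * 4 ^ ((n + 1) / (τ - 1)) *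
          (N : ℝ) ^ ((n + 1) / (τ - 1) - (1 - ε) * n) := by
        have h1 : b ^ n * b = 4 ^ ((n + 1) / (τ - 1)) * (N : ℝ) ^ ((n + 1) / (τ - 1)) := by
          rw [← pow_succ, hb, ← Real.rpow_natCast, ← Real.rpow_mul (by positivity),
            ← Real.mul_rpow (by norm_num) hN0.le]
          congr 1
          push_cast; ring
        have h2 : ((N : ℝ) ^ (-(1 - ε))) ^ n = (N : ℝ) ^ (-((1 - ε) * n)) := by
          rw [← Real.rpow_natCast, ← Real.rpow_mul hN0.le]; congr 1; ring
        rw [h1, h2, sub_eq_add_neg _ ((1 - ε) * (n : ℝ)), Real.rpow_add hN0]; ring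
    _ ≤ 1 / 8 := e1

/-! ### Supply and spacing of children -/

/-- Supply of children: for every parent `c0` with `q0 ∈ [N0, 2N0)` and every large `N`, each
denominator `q ∈ [N, 2N]` carries many numerators `1 + Dm` whose shell balls are inside that of
`c0`, and which stay away from all rationals with denominators `q'` in the critical range
`N0^{τ-1}/2 ≤ q'`, `q'^{τ-1} ≤ 4N`. -/
theorem eventually_children {n : ℕ} (hn : 1 ≤ n) (i0 : Fin n) {τ ε : ℝ}
    (hτ : 2 + 1 / (n : ℝ) < τ) (hε0 : 0 < ε) (hε1 : ε < 1 / 2)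
    (hε : (n + 1) / (τ - 1) < (1 - ε) * n) :
    ∀ᶠ N0 : ℕ in atTop, ∀ c0 : (Fin n → ℤ) × ℕ, N0 ≤ c0.2 → c0.2 < 2 * N0 →
    ∀ᶠ N : ℕ in atTop, ∃ D : ℕ, 1 ≤ D ∧ (D : ℝ) ≤ (N : ℝ) ^ ε ∧
      ∀ q : ℕ, N ≤ q → q ≤ 2 * N → ∃ G : Finset (Fin n → ℤ),
        (N * ((c0.2 : ℝ) ^ (-τ) / 4) / (2 * D)) ^ n / 2 ≤ G.card ∧
        ∀ m ∈ G, IsCoprime (1 + D * m i0) (q : ℤ) ∧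
          shellBall τ (fun i => 1 + D * m i, q) ⊆ shellBall τ c0 ∧
          ∀ c' : (Fin n → ℤ) × ℕ, (N0 : ℝ) ^ (τ - 1) / 2 ≤ c'.2 → (c'.2 : ℝ) ^ (τ - 1) ≤ 4 * N →
            2 * (c'.2 : ℝ) ^ (-τ) < ‖ratPt c' - ratPt (fun i => 1 + D * m i, q)‖ := by
  have hτ2 : 2 < τ := by
    have : (0 : ℝ) < 1 / n := by positivity
    linarith
  filter_upwards [eventually_small_sums hn hτ, eventually_ge_atTop 1] with N0 hN0 hN01 c0 hc1 hc2
  obtain ⟨hA1, hA2, hsmall⟩ := hN0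
  have hN0p : (0 : ℝ) < N0 := by exact_mod_cast hN01
  have hc0p : (0 : ℝ) < c0.2 := by exact_mod_cast (lt_of_lt_of_le hN01 hc1)
  set A := (N0 : ℝ) ^ (τ - 1) / 2 with hA
  set R := (c0.2 : ℝ) ^ (-τ) / 4 with hRdef
  have hR : 0 < R := by positivity
  have hRle : (2 : ℝ) ^ (-τ) * (N0 : ℝ) ^ (-τ) / 4 ≤ R := by
    rw [hRdef, ← Real.mul_rpow (by norm_num) hN0p.le]
    gcongr ?_ / 4
    exact Real.rpow_le_rpow_of_nonpos hc0p (by exact_mod_cast hc2.le) (by linarith)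
  have e1 := eventually_mul_rpow_le 1 (θ := -τ) (by linarith) (half_pos hR)
  have e2 := eventually_mul_rpow_le (2 / R) (θ := 1 / 2 - (1 - ε)) (by linarith) one_pos
  filter_upwards [eventually_exists_progression hε0 (δ := 1 / 4) (by norm_num),
    eventually_third_sum (by linarith : 1 < τ) hε R hR, e1, e2, eventually_ge_atTop 1]
    with N hprog hthird e1 e2 hN1
  have hN : (1 : ℝ) ≤ N := by exact_mod_cast hN1
  have hNp : (0 : ℝ) < N := by linarith
  obtain ⟨D, hD1, hDε, hprog⟩ := hprog
  refine ⟨D, hD1, hDε, fun q hq1 hq2 => ?_⟩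
  have hDp : (0 : ℝ) < D := by exact_mod_cast hD1
  have hqp : 0 < q := by omega
  have hqp' : (0 : ℝ) < q := by exact_mod_cast hqp
  have hNq : (N : ℝ) ≤ q := by exact_mod_cast hq1
  set t := q * R / (2 * D) with ht
  have ht0 : (N : ℝ) ^ (1 - ε) * R / 2 ≤ t := by
    rw [ht, Real.rpow_sub hNp, Real.rpow_one]
    calc (N : ℝ) / (N : ℝ) ^ ε * R / 2 = N * R / (2 * (N : ℝ) ^ ε) := by ring
      _ ≤ q * R / (2 * D) := by gcongr
  have hsqrt : (N : ℝ) ^ (1 / 2 : ℝ) ≤ t := by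
    refine le_trans ?_ ht0
    rw [Real.rpow_sub hNp] at e2
    have : 0 < (N : ℝ) ^ (1 - ε) := by positivity
    rw [div_mul_div_comm, div_le_one (by positivity)] at e2
    linarith
  have ht1 : 1 ≤ t := (Real.one_le_rpow hN (by norm_num)).trans hsqrt
  have htp : 0 < t := by linarith
  classical
  set S : Finset ℕ := (Finset.range (4 * N + 1)).filter
    (fun q' => A ≤ (q' : ℝ) ∧ (q' : ℝ) ^ (τ - 1) ≤ 4 * N) with hS
  have hSmem : ∀ q' ∈ S, A ≤ (q' : ℝ) ∧ (q' : ℝ) ^ (τ - 1) ≤ 4 * N := fun q' hq' =>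
    (Finset.mem_filter.1 hq').2
  have hSpos : ∀ q' ∈ S, 0 < q' := fun q' hq' => by
    have := hA1.trans (hSmem q' hq').1
    exact_mod_cast lt_of_lt_of_le one_pos this
  have hSin : ∀ q' : ℕ, A ≤ (q' : ℝ) → (q' : ℝ) ^ (τ - 1) ≤ 4 * N → q' ∈ S := by
    intro q' h1 h2
    refine Finset.mem_filter.2 ⟨?_, h1, h2⟩
    have h3 : (q' : ℝ) ≤ 4 * N := le_trans
      (by simpa using Real.rpow_le_rpow_of_exponent_le (hA1.trans h1) (by linarith : 1 ≤ τ - 1)) h2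
    have : q' ≤ 4 * N := by exact_mod_cast h3
    rw [Finset.mem_range]; omega
  obtain ⟨G, hG1, hG2⟩ := good_count (τ := τ) i0 hqp (by omega : 0 < D)
    (fun i => ratPt c0 i + (c0.2 : ℝ) ^ (-τ) / 2) hR ht ht1
    (fun a b hab => hprog q hq1 hq2 a b (hsqrt.trans hab)) S
    (fun q' hq' => ⟨hSpos q' hq', by
      refine le_trans ?_ (hA2.trans hRle)
      gcongr 2 * ?_
      exact Real.rpow_le_rpow_of_nonpos (by linarith) (hSmem q' hq').1 (by linarith)⟩) (by
      calc ∑ q' ∈ S, ((4 * R * q' + 1) * (8 * (q' : ℝ) ^ (-τ) / R + 1 / t)) ^ n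
          ≤ ∑ q' ∈ S, (3 ^ n * ((32 * (q' : ℝ) ^ (1 - τ)) ^ n + (8 * (q' : ℝ) ^ (-τ) / R) ^ n) +
              3 ^ n * ((4 * R + 1) * q' / t) ^ n) := by
            refine Finset.sum_le_sum fun q' hq' => ?_
            have hq'0 : (0 : ℝ) < q' := by exact_mod_cast hSpos q' hq'
            have hq'1 : (1 : ℝ) ≤ q' := by exact_mod_cast hSpos q' hq'
            have h1 : (4 * R * q' + 1) * (8 * (q' : ℝ) ^ (-τ) / R + 1 / t) ≤
                32 * (q' : ℝ) ^ (1 - τ) + 8 * (q' : ℝ) ^ (-τ) / R + (4 * R + 1) * q' / t := by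
              have h2 : (q' : ℝ) ^ (1 - τ) = q' * (q' : ℝ) ^ (-τ) := by
                rw [sub_eq_add_neg, Real.rpow_add hq'0, Real.rpow_one]
              have h3 : (4 * R * q' + 1) / t ≤ (4 * R + 1) * q' / t := by
                gcongr; nlinarith
              have h4 : (4 * R * q' + 1) * (8 * (q' : ℝ) ^ (-τ) / R + 1 / t) =
                32 * (q' * (q' : ℝ) ^ (-τ)) + 8 * (q' : ℝ) ^ (-τ) / R + (4 * R * q' + 1) / t := by
                field_simp; ring
              rw [h4, h2]; linarith
            calc _ ≤ (32 * (q' : ℝ) ^ (1 - τ) + 8 * (q' : ℝ) ^ (-τ) / R +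
                    (4 * R + 1) * q' / t) ^ n := by gcongr
              _ ≤ _ := add_add_pow_le (by positivity) (by positivity) (by positivity) n
              _ = _ := by ring
        _ ≤ 1 / 8 + 1 / 8 := by
            rw [Finset.sum_add_distrib]
            exact add_le_add (hsmall R hRle S fun q' hq' => (hSmem q' hq').1)
              (hthird t ht0 S fun q' hq' => ⟨hSpos q' hq', (hSmem q' hq').2⟩)
        _ = 1 / 4 := by norm_num)
  refine ⟨G, le_trans ?_ hG1, fun m hm => ?_⟩
  · rw [ht]; gcongr
  obtain ⟨h1, h2, h3⟩ := hG2 m hm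
  refine ⟨h2, ?_, fun c' hc1' hc2' => h3 c'.1 c'.2 (hSin _ hc1' hc2')⟩
  have hqR : (q : ℝ) ^ (-τ) ≤ R / 2 := by
    rw [one_mul] at e1
    exact (Real.rpow_le_rpow_of_nonpos hNp hNq (by linarith)).trans e1
  have hqn : 0 ≤ (q : ℝ) ^ (-τ) := by positivity
  refine Metric.closedBall_subset_closedBall' ?_
  have hd : dist (fun i => ratPt (fun i => 1 + D * m i, q) i + (q : ℝ) ^ (-τ) / 2)
      (fun i => ratPt c0 i + (c0.2 : ℝ) ^ (-τ) / 2) ≤ R / 2 + R / 4 := by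
    rw [dist_pi_le_iff (by positivity)]
    intro i
    have h4 : |((1 + D * m i : ℤ) : ℝ) / q - (ratPt c0 i + (c0.2 : ℝ) ^ (-τ) / 2)| ≤ R / 2 := by
      have h5 : ((1 + D * m i : ℤ) : ℝ) / q - (ratPt c0 i + (c0.2 : ℝ) ^ (-τ) / 2) =
          (((1 + D * m i : ℤ) : ℝ) - q * (ratPt c0 i + (c0.2 : ℝ) ^ (-τ) / 2)) / q := by
        field_simp
      rw [h5, abs_div, abs_of_pos hqp', div_le_iff₀ hqp']
      linarith [h1 i]
    rw [abs_le] at h4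
    rw [Real.dist_eq, abs_le]
    simp only [ratPt] at h4 ⊢
    constructor <;> linarith [h4.1, h4.2]
  change (q : ℝ) ^ (-τ) / 4 + dist (fun i => ratPt (fun i => 1 + D * m i, q) i + (q : ℝ) ^ (-τ) / 2)
      (fun i => ratPt c0 i + (c0.2 : ℝ) ^ (-τ) / 2) ≤ R
  linarith

/-- Counting in a ball one denominator at a time. -/
theorem count_by_denominator {n N D : ℕ} (hD : 0 < D) (T : Finset ℕ) (x : Fin n → ℝ) {ρ : ℝ}
    (hρ : 0 ≤ ρ) (S : Finset ((Fin n → ℤ) × ℕ))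
    (hS : ∀ c ∈ S, c.2 ∈ T ∧ 0 < c.2 ∧ c.2 ≤ 2 * N ∧ (∃ m : Fin n → ℤ, c.1 = fun i => 1 + D * m i) ∧
      ‖ratPt c - x‖ ≤ ρ) :
    (S.card : ℝ) ≤ T.card * (4 * (ρ * N / D) + 1) ^ n := by
  classical
  have hD0 : (0 : ℝ) < D := by exact_mod_cast hD
  have hm : ∀ c ∈ S, ∃ m : Fin n → ℤ, c.1 = fun i => 1 + D * m i := fun c hc => (hS c hc).2.2.2.1
  choose! m hm using hm
  have hfib : ∀ q ∈ T, ((S.filter (fun c => c.2 = q)).card : ℝ) ≤ (4 * (ρ * N / D) + 1) ^ n := by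
    intro q _
    have hinj : Set.InjOn m (S.filter (fun c => c.2 = q)) := by
      intro c hc c' hc' h
      rw [Finset.mem_coe, Finset.mem_filter] at hc hc'
      refine Prod.ext ?_ (hc.2.trans hc'.2.symm)
      rw [hm c hc.1, hm c' hc'.1, h]
    rw [← Finset.card_image_of_injOn hinj]
    have := card_box_le ((S.filter (fun c => c.2 = q)).image m) (fun i => (q * x i - 1) / D)
      (2 * (ρ * N / D)) (by positivity) ?_
    · convert this using 2; ring
    · intro v hv i
      obtain ⟨c, hc, rfl⟩ := Finset.mem_image.1 hv
      obtain ⟨hcS, rfl⟩ := Finset.mem_filter.1 hc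
      obtain ⟨-, h1, h2, -, h3⟩ := hS c hcS
      have h4 := (norm_le_pi_norm (ratPt c - x) i).trans h3
      rw [Pi.sub_apply, Real.norm_eq_abs] at h4
      have hc0 : (0 : ℝ) < c.2 := by exact_mod_cast h1
      have hc2 : (c.2 : ℝ) ≤ 2 * N := by exact_mod_cast h2
      have h5 : ratPt c i = (1 + D * m c i) / c.2 := by
        simp only [ratPt]; rw [congrFun (hm c hcS) i]; push_cast; rfl
      have h6 : (m c i : ℝ) - (c.2 * x i - 1) / D = (ratPt c i - x i) * (c.2 / D) := by
        rw [h5]; field_simp; ring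
      rw [h6, abs_mul, abs_of_pos (by positivity : (0 : ℝ) < c.2 / D)]
      calc |ratPt c i - x i| * (c.2 / D) ≤ ρ * (2 * N / D) := by gcongr
        _ = _ := by ring
  rw [Finset.card_eq_sum_card_fiberwise (f := fun c : (Fin n → ℤ) × ℕ => c.2) (t := T)
    (fun c hc => (hS c hc).1)]
  push_cast
  calc _ ≤ ∑ q ∈ T, (4 * (ρ * N / D) + 1) ^ n := Finset.sum_le_sum hfib
    _ = _ := by rw [Finset.sum_const, nsmul_eq_mul]

/-- Counting in a ball by the `1/(4N²)`-separation of rationals with denominators `< 2N`. -/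
theorem count_by_separation {n N : ℕ} (i0 : Fin n) (x : Fin n → ℝ) {ρ : ℝ}
    (hρ : 0 ≤ ρ) (S : Finset ((Fin n → ℤ) × ℕ))
    (hS : ∀ c ∈ S, 0 < c.2 ∧ c.2 < 2 * N ∧ IsCoprime (c.1 i0) (c.2 : ℤ) ∧ ‖ratPt c - x‖ ≤ ρ) :
    (S.card : ℝ) ≤ (8 * ((N : ℝ) ^ 2 * ρ) + 3) ^ n := by
  classical
  set f : (Fin n → ℤ) × ℕ → (Fin n → ℤ) := fun c i => ⌊4 * (N : ℝ) ^ 2 * ratPt c i⌋ with hf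
  have hinj : Set.InjOn f S := by
    intro c hc c' hc' h
    obtain ⟨h1, h2, h3, -⟩ := hS c hc
    obtain ⟨h1', h2', h3', -⟩ := hS c' hc'
    by_contra hne
    have hne' : ratPt c ≠ ratPt c' := fun h => hne (ratPt_inj h1 h1' h3 h3' h)
    have hsep := ratPt_sep h1 h1' hne'
    have hc0 : (0 : ℝ) < c.2 := by exact_mod_cast h1
    have hc0' : (0 : ℝ) < c'.2 := by exact_mod_cast h1'
    have hc2 : (c.2 : ℝ) < 2 * N := by exact_mod_cast h2
    have hc2' : (c'.2 : ℝ) < 2 * N := by exact_mod_cast h2'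
    have hN : (0 : ℝ) < N := by linarith
    have hlt : 1 / (4 * (N : ℝ) ^ 2) < 1 / ((c.2 : ℝ) * c'.2) := by
      refine one_div_lt_one_div_of_lt (by positivity) ?_
      nlinarith
    have hle : ‖ratPt c - ratPt c'‖ ≤ 1 / (4 * (N : ℝ) ^ 2) := by
      rw [pi_norm_le_iff_of_nonneg (by positivity)]
      intro i
      have h4 := Int.abs_sub_lt_one_of_floor_eq_floor (congrFun h i)
      rw [← mul_sub, abs_mul, abs_of_pos (by positivity)] at h4
      rw [Pi.sub_apply, Real.norm_eq_abs, le_div_iff₀ (by positivity), mul_comm]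
      exact h4.le
    linarith
  rw [← Finset.card_image_of_injOn hinj]
  have := card_box_le (S.image f) (fun i => 4 * (N : ℝ) ^ 2 * x i) (4 * ((N : ℝ) ^ 2 * ρ) + 1)
    (by positivity) ?_
  · convert this using 2; ring
  · intro v hv i
    obtain ⟨c, hc, rfl⟩ := Finset.mem_image.1 hv
    have h4 := (norm_le_pi_norm (ratPt c - x) i).trans (hS c hc).2.2.2
    rw [Pi.sub_apply, Real.norm_eq_abs, abs_le] at h4
    have h5 := Int.floor_le (4 * (N : ℝ) ^ 2 * ratPt c i)
    have h6 := Int.lt_floor_add_one (4 * (N : ℝ) ^ 2 * ratPt c i)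
    have h7 : (0 : ℝ) ≤ 4 * (N : ℝ) ^ 2 := by positivity
    have h8 := mul_le_mul_of_nonneg_left h4.1 h7
    have h9 := mul_le_mul_of_nonneg_left h4.2 h7
    simp only [hf]
    rw [abs_le]
    constructor <;> nlinarith

/-! ### Equidistributed families of children -/

/-- Equidistribution of a family `G` of children: its proportion in a ball of radius `ρ ≥ N^{-τ}`
is at most a constant times the relative volume of the ball in the parent, plus `ρ^{s}`. -/
theorem children_mass {n N N0 D : ℕ} (i0 : Fin n) {τ σ s R : ℝ} (hn : 1 ≤ n)
    (hN : 1 ≤ N) (hN0 : 1 ≤ N0) (hD : 1 ≤ D) (hs : 0 < s) (hsn : s ≤ n)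
    (hR : (2 : ℝ) ^ (-τ) * (N0 : ℝ) ^ (-τ) / 4 ≤ R)
    (T : Finset ℕ) (hT : (N : ℝ) ^ σ ≤ T.card)
    (G : Finset ((Fin n → ℤ) × ℕ)) (hGcard : T.card * ((N * R / (2 * D)) ^ n / 2) ≤ G.card)
    (hG : ∀ c ∈ G, c.2 ∈ T ∧ 0 < c.2 ∧ c.2 < 2 * N ∧ IsCoprime (c.1 i0) (c.2 : ℤ) ∧
      (∃ m : Fin n → ℤ, c.1 = fun i => 1 + D * m i))
    (hE1 : 2 * 11 ^ n * (N : ℝ) ^ ((2 - σ / n) * s) ≤ (N * R / (2 * D)) ^ n)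
    (hE2 : 2 * 11 ^ n * (N : ℝ) ^ (τ * s) ≤ (N : ℝ) ^ σ * (N * R / (2 * D)) ^ n)
    (x : Fin n → ℝ) {ρ : ℝ} (hρ : (N : ℝ) ^ (-τ) ≤ ρ) (S : Finset ((Fin n → ℤ) × ℕ)) (hSG : S ⊆ G)
    (hS : ∀ c ∈ S, ‖ratPt c - x‖ ≤ ρ) :
    (S.card : ℝ) ≤ G.card * (2 * (40 * 2 ^ τ) ^ n * (ρ * (N0 : ℝ) ^ τ) ^ n + ρ ^ s) := by
  have hNp : (0 : ℝ) < N := by exact_mod_cast hN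
  have hN0p : (0 : ℝ) < N0 := by exact_mod_cast hN0
  have hDp : (0 : ℝ) < D := by exact_mod_cast hD
  have hnp : (0 : ℝ) < n := by exact_mod_cast hn
  have hρ0 : 0 < ρ := lt_of_lt_of_le (by positivity) hρ
  have hR0 : 0 < R := lt_of_lt_of_le (by positivity) hR
  set t := N * R / (2 * D) with ht
  have ht0 : 0 < t := by positivity
  have c1 := count_by_denominator hD T x hρ0.le S (N := N) (fun c hc => by
    obtain ⟨h1, h2, h3, h4, h5⟩ := hG c (hSG hc)
    exact ⟨h1, h2, h3.le, h5, hS c hc⟩)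
  have c2 := count_by_separation i0 x hρ0.le S (N := N) (fun c hc => by
    obtain ⟨h1, h2, h3, h4, h5⟩ := hG c (hSG hc)
    exact ⟨h2, h3, h4, hS c hc⟩)
  have hP1 : 0 ≤ 2 * (40 * (2 : ℝ) ^ τ) ^ n * (ρ * (N0 : ℝ) ^ τ) ^ n := by positivity
  have hP2 : 0 ≤ ρ ^ s := by positivity
  have hrpow : ∀ y : ℝ, (N : ℝ) ^ y * (N : ℝ) ^ (-y) = 1 := fun y => by
    rw [← Real.rpow_add hNp]; simp
  -- it suffices to bound the cardinality by one of the two terms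
  have fin1 : (S.card : ℝ) ≤ T.card * (t ^ n / 2) * (2 * (40 * (2 : ℝ) ^ τ) ^ n * (ρ * (N0 : ℝ) ^ τ) ^ n) →
      (S.card : ℝ) ≤ G.card * (2 * (40 * 2 ^ τ) ^ n * (ρ * (N0 : ℝ) ^ τ) ^ n + ρ ^ s) := fun h =>
    h.trans (mul_le_mul hGcard (by linarith) hP1 (by positivity))
  have fin2 : (S.card : ℝ) ≤ T.card * (t ^ n / 2) * ρ ^ s →
      (S.card : ℝ) ≤ G.card * (2 * (40 * 2 ^ τ) ^ n * (ρ * (N0 : ℝ) ^ τ) ^ n + ρ ^ s) := fun h =>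
    h.trans (mul_le_mul hGcard (by linarith) hP2 (by positivity))
  -- Large `ρ`: the lattice count per denominator is volume-like. Below `D / N` each denominator
  -- contributes `O(1)`, which suffices down to `ρ = N ^ -(2 - σ / n)`. For smaller `ρ` the separation
  -- of the rationals is the better bound, volume-like down to `N ^ -2` and `O(1)` afterwards.
  rcases le_total (D : ℝ) (ρ * N) with hρD | hρD
  · apply fin1
    have h1 : 1 ≤ ρ * N / D := by rwa [le_div_iff₀ hDp, one_mul]
    have h2 : 2 ^ τ * (N0 : ℝ) ^ τ * R * 4 ≥ 1 := by
      have h3 : (2 : ℝ) ^ τ * (N0 : ℝ) ^ τ * ((2 : ℝ) ^ (-τ) * (N0 : ℝ) ^ (-τ) / 4) * 4 = 1 := by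
        rw [Real.rpow_neg (by norm_num), Real.rpow_neg hN0p.le]
        have : (2 : ℝ) ^ τ ≠ 0 := by positivity
        have : (N0 : ℝ) ^ τ ≠ 0 := by positivity
        field_simp
      rw [ge_iff_le, ← h3]
      gcongr
    have h4 : 4 * (ρ * N / D) + 1 ≤ t * (40 * 2 ^ τ) * (ρ * (N0 : ℝ) ^ τ) := by
      calc 4 * (ρ * N / D) + 1 ≤ 5 * (ρ * N / D) * 1 := by linarith
        _ ≤ 5 * (ρ * N / D) * (2 ^ τ * (N0 : ℝ) ^ τ * R * 4) := by gcongr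
        _ = _ := by rw [ht]; field_simp; ring
    calc (S.card : ℝ) ≤ T.card * (4 * (ρ * N / D) + 1) ^ n := c1
      _ ≤ T.card * (t * (40 * 2 ^ τ) * (ρ * (N0 : ℝ) ^ τ)) ^ n := by gcongr
      _ = _ := by rw [mul_pow, mul_pow]; ring
  apply fin2
  rcases le_total ((N : ℝ) ^ (-(2 - σ / n))) ρ with hρ1 | hρ1
  · have h1 : (N : ℝ) ^ (-((2 - σ / n) * s)) ≤ ρ ^ s := by
      rw [← neg_mul, Real.rpow_mul hNp.le]; gcongr
    have h2 : 4 * (ρ * N / D) + 1 ≤ 11 := by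
      have : ρ * N / D ≤ 1 := by rwa [div_le_one hDp]
      linarith
    calc (S.card : ℝ) ≤ T.card * (4 * (ρ * N / D) + 1) ^ n := c1
      _ ≤ T.card * 11 ^ n := by gcongr
      _ = T.card * (2 * 11 ^ n * ((N : ℝ) ^ ((2 - σ / n) * s) * (N : ℝ) ^ (-((2 - σ / n) * s))) / 2) := by
          rw [hrpow]; ring
      _ = T.card * (2 * 11 ^ n * (N : ℝ) ^ ((2 - σ / n) * s) / 2) * (N : ℝ) ^ (-((2 - σ / n) * s)) := by
          ring
      _ ≤ _ := by gcongr
  rcases le_total 1 ((N : ℝ) ^ 2 * ρ) with hρ2 | hρ2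
  · have h1 : ρ ^ (n : ℝ) ≤ ρ ^ s * (N : ℝ) ^ (-(2 - σ / n) * (n - s)) := by
      rw [Real.rpow_mul hNp.le]
      calc ρ ^ (n : ℝ) = ρ ^ s * ρ ^ (n - s) := by rw [← Real.rpow_add hρ0]; congr 1; ring
        _ ≤ _ := by
          gcongr
    calc (S.card : ℝ) ≤ (8 * ((N : ℝ) ^ 2 * ρ) + 3) ^ n := c2
      _ ≤ (11 * ((N : ℝ) ^ 2 * ρ)) ^ n := by gcongr; linarith
      _ = 11 ^ n * (N : ℝ) ^ (2 * n : ℝ) * ρ ^ (n : ℝ) := by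
          have h2 : (N : ℝ) ^ (2 * n : ℝ) = ((N : ℝ) ^ 2) ^ n := by
            rw [Real.rpow_mul hNp.le, Real.rpow_natCast]; norm_cast
          rw [mul_pow, mul_pow, Real.rpow_natCast, h2]; ring
      _ ≤ 11 ^ n * (N : ℝ) ^ (2 * n : ℝ) * (ρ ^ s * (N : ℝ) ^ (-(2 - σ / n) * (n - s))) := by gcongr
      _ = (N : ℝ) ^ σ * (2 * 11 ^ n * (N : ℝ) ^ ((2 - σ / n) * s) / 2) * ρ ^ s := by
          have : (N : ℝ) ^ (2 * n : ℝ) * (N : ℝ) ^ (-(2 - σ / n) * (n - s)) =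
              (N : ℝ) ^ σ * (N : ℝ) ^ ((2 - σ / n) * s) := by
            rw [← Real.rpow_add hNp, ← Real.rpow_add hNp]
            congr 1
            field_simp
            ring
          linear_combination 11 ^ n * ρ ^ s * this
      _ ≤ _ := by gcongr
  · have h1 : (N : ℝ) ^ (-(τ * s)) ≤ ρ ^ s := by
      rw [← neg_mul, Real.rpow_mul hNp.le]; gcongr
    calc (S.card : ℝ) ≤ (8 * ((N : ℝ) ^ 2 * ρ) + 3) ^ n := c2
      _ ≤ 11 ^ n := by gcongr; linarith
      _ = (2 * 11 ^ n * ((N : ℝ) ^ (τ * s) * (N : ℝ) ^ (-(τ * s))) / 2) := by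
          rw [hrpow]; ring
      _ = (2 * 11 ^ n * (N : ℝ) ^ (τ * s) / 2) * (N : ℝ) ^ (-(τ * s)) := by ring
      _ ≤ ((N : ℝ) ^ σ * t ^ n / 2) * ρ ^ s := by gcongr
      _ ≤ (T.card * t ^ n / 2) * ρ ^ s := by gcongr
      _ = _ := by ring

/-- One step of the construction: every large `N` for which `Q ∩ [N, 2N)` has at least `N^σ`
elements provides a family `G` of children of `c0`, all at scale `N`, which is equidistributed and
avoids the rationals with denominators in the critical range. -/
theorem eventually_family {n : ℕ} (hn : 1 ≤ n) (i0 : Fin n) {τ σ s : ℝ}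
    (hτ : 2 + 1 / (n : ℝ) < τ) (hσ0 : 0 ≤ σ) (hσ1 : σ ≤ 1) (hs0 : 0 < s) (hs : s < (n + σ) / τ)
    (Q : Set ℕ) [DecidablePred (· ∈ Q)] :
    ∀ᶠ N0 : ℕ in atTop, ∀ c0 : (Fin n → ℤ) × ℕ, N0 ≤ c0.2 → c0.2 < 2 * N0 →
    ∀ᶠ N : ℕ in atTop, (N : ℝ) ^ σ ≤ ((Finset.Ico N (2 * N)).filter (· ∈ Q)).card →
      ∃ G : Finset ((Fin n → ℤ) × ℕ),
        (∀ c ∈ G, c.2 ∈ Q ∧ N ≤ c.2 ∧ c.2 < 2 * N ∧ IsCoprime (c.1 i0) (c.2 : ℤ) ∧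
          shellBall τ c ⊆ shellBall τ c0 ∧
          ∀ c' : (Fin n → ℤ) × ℕ, (N0 : ℝ) ^ (τ - 1) / 2 ≤ c'.2 → (c'.2 : ℝ) ^ (τ - 1) ≤ 4 * N →
            2 * (c'.2 : ℝ) ^ (-τ) < ‖ratPt c' - ratPt c‖) ∧
        (N : ℝ) ^ (τ * s) ≤ G.card ∧
        ∀ (x : Fin n → ℝ) (ρ : ℝ), (N : ℝ) ^ (-τ) ≤ ρ → ∀ S ⊆ G, (∀ c ∈ S, ‖ratPt c - x‖ ≤ ρ) →
          (S.card : ℝ) ≤ G.card * (2 * (40 * 2 ^ τ) ^ n * (ρ * (N0 : ℝ) ^ τ) ^ n + ρ ^ s) := by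
  have hn1 : (1 : ℝ) ≤ n := by exact_mod_cast hn
  have hnp : (0 : ℝ) < n := by linarith
  have hnτ : 2 * n + 1 < n * τ := by
    have := mul_lt_mul_of_pos_left hτ hnp
    rw [mul_add, mul_one_div_cancel hnp.ne'] at this
    linarith
  have hτ2 : 2 < τ := by
    have : (0 : ℝ) < 1 / n := by positivity
    linarith
  have hτs : τ * s < n + σ := by rw [lt_div_iff₀ (by linarith)] at hs; linarith
  have hx1 : σ / n ≤ 1 := by rw [div_le_one hnp]; linarith
  have hx0 : 0 ≤ σ / n := by positivity
  have hsn : s ≤ n := by nlinarith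
  have k1 : (n + 1) / (τ - 1) < n := by
    rw [div_lt_iff₀ (by linarith)]; linarith
  have k2 : (2 - σ / n) * s < n := by
    have h1 : (2 - σ / n) * (n + σ) ≤ 2 * n + 1 := by
      have : σ / n * n = σ := by field_simp
      nlinarith
    have h2 : (2 - σ / n) * (τ * s) < n * τ := by nlinarith
    nlinarith
  obtain ⟨ε, hε0, hε1, hεa, hεb, hεc⟩ : ∃ ε : ℝ, 0 < ε ∧ ε < 1 / 2 ∧
      (n + 1) / (τ - 1) < (1 - ε) * n ∧ (2 - σ / n) * s < (1 - ε) * n ∧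
      τ * s - σ < (1 - ε) * n := by
    have hlim : Tendsto (fun ε : ℝ => (1 - ε) * n) (nhdsWithin 0 (Set.Ioi 0)) (nhds n) := by
      have : Continuous (fun ε : ℝ => (1 - ε) * n) := by fun_prop
      simpa using (this.tendsto 0).mono_left nhdsWithin_le_nhds
    have h := (eventually_mem_nhdsWithin (a := (0 : ℝ)) (s := Set.Ioi 0)).and
      (((eventually_lt_nhds (by norm_num : (0 : ℝ) < 1 / 2)).filter_mono nhdsWithin_le_nhds).and
      ((hlim.eventually (eventually_gt_nhds k1)).and
      ((hlim.eventually (eventually_gt_nhds k2)).and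
      (hlim.eventually (eventually_gt_nhds (by linarith : τ * s - σ < n))))))
    exact h.exists
  filter_upwards [eventually_children hn i0 hτ hε0 hε1 hεa, eventually_ge_atTop 1]
    with N0 hch hN01 c0 hc1 hc2
  have hN0p : (0 : ℝ) < N0 := by exact_mod_cast hN01
  have hc0p : (0 : ℝ) < c0.2 := by exact_mod_cast (lt_of_lt_of_le hN01 hc1)
  set R := (c0.2 : ℝ) ^ (-τ) / 4 with hRdef
  have hR : 0 < R := by positivity
  have hRle : (2 : ℝ) ^ (-τ) * (N0 : ℝ) ^ (-τ) / 4 ≤ R := by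
    rw [hRdef, ← Real.mul_rpow (by norm_num) hN0p.le]
    gcongr ?_ / 4
    exact Real.rpow_le_rpow_of_nonpos hc0p (by exact_mod_cast hc2.le) (by linarith)
  have e1 := eventually_mul_rpow_le (2 * 11 ^ n * (2 / R) ^ n)
    (θ := (2 - σ / n) * s - (1 - ε) * n) (by linarith) one_pos
  have e2 := eventually_mul_rpow_le (2 * 11 ^ n * (2 / R) ^ n)
    (θ := τ * s - σ - (1 - ε) * n) (by linarith) one_pos
  filter_upwards [hch c0 hc1 hc2, e1, e2, eventually_ge_atTop 1] with N hch e1 e2 hN1 hcard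
  have hN : (1 : ℝ) ≤ N := by exact_mod_cast hN1
  have hNp : (0 : ℝ) < N := by linarith
  obtain ⟨D, hD1, hDε, hch⟩ := hch
  have hDp : (0 : ℝ) < D := by exact_mod_cast hD1
  set t := N * R / (2 * D) with ht
  have ht0 : (N : ℝ) ^ (1 - ε) * R / 2 ≤ t := by
    rw [ht, Real.rpow_sub hNp, Real.rpow_one]
    calc (N : ℝ) / (N : ℝ) ^ ε * R / 2 = N * R / (2 * (N : ℝ) ^ ε) := by ring
      _ ≤ N * R / (2 * D) := by gcongr
  have htp : 0 < t := by positivity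
  have key : ∀ y : ℝ, 2 * 11 ^ n * (2 / R) ^ n * (N : ℝ) ^ (y - (1 - ε) * n) ≤ 1 →
      2 * 11 ^ n * (N : ℝ) ^ y ≤ t ^ n := by
    intro y hy
    refine le_trans ?_ (pow_le_pow_left₀ (by positivity) ht0 n)
    calc 2 * 11 ^ n * (N : ℝ) ^ y = (2 * 11 ^ n * (2 / R) ^ n * (N : ℝ) ^ (y - (1 - ε) * n)) *
          ((N : ℝ) ^ (1 - ε) * R / 2) ^ n := by
          have h1 : (N : ℝ) ^ y = (N : ℝ) ^ (y - (1 - ε) * n) * ((N : ℝ) ^ (1 - ε)) ^ n := by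
            rw [← Real.rpow_natCast, ← Real.rpow_mul hNp.le, ← Real.rpow_add hNp]
            congr 1; ring
          have h2 : ((N : ℝ) ^ (1 - ε) * R / 2) ^ n * (2 / R) ^ n = ((N : ℝ) ^ (1 - ε)) ^ n := by
            rw [← mul_pow]; congr 1; field_simp
          rw [h1, ← h2]; ring
      _ ≤ 1 * ((N : ℝ) ^ (1 - ε) * R / 2) ^ n := by gcongr
      _ = _ := one_mul _
  have hE1 := key _ e1
  have hE2 : 2 * 11 ^ n * (N : ℝ) ^ (τ * s) ≤ (N : ℝ) ^ σ * t ^ n := by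
    have h1 := key _ e2
    have h2 : (N : ℝ) ^ (τ * s) = (N : ℝ) ^ σ * (N : ℝ) ^ (τ * s - σ) := by
      rw [← Real.rpow_add hNp]; congr 1; ring
    rw [h2]
    calc _ = (N : ℝ) ^ σ * (2 * 11 ^ n * (N : ℝ) ^ (τ * s - σ)) := by ring
      _ ≤ _ := by gcongr
  set T := (Finset.Ico N (2 * N)).filter (· ∈ Q) with hT
  have hTm : ∀ q ∈ T, N ≤ q ∧ q < 2 * N ∧ q ∈ Q := by
    intro q hq
    rw [hT, Finset.mem_filter, Finset.mem_Ico] at hq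
    exact ⟨hq.1.1, hq.1.2, hq.2⟩
  choose! g hg1 hg2 using hch
  classical
  let φ : (Σ _ : ℕ, (Fin n → ℤ)) → (Fin n → ℤ) × ℕ := fun a => (fun i => 1 + D * a.2 i, a.1)
  have hφ : Function.Injective φ := by
    rintro ⟨q, m⟩ ⟨q', m'⟩ h
    simp only [φ, Prod.mk.injEq] at h
    obtain ⟨h1, rfl⟩ := h
    congr 1
    funext i
    have h2 := congrFun h1 i
    have hD' : (D : ℤ) ≠ 0 := by exact_mod_cast hDp.ne'
    exact mul_left_cancel₀ hD' (add_left_cancel h2)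
  set G := (T.sigma g).image φ with hG
  have hGcard : T.card * (t ^ n / 2) ≤ (G.card : ℝ) := by
    rw [hG, Finset.card_image_of_injective _ hφ, Finset.card_sigma, ← nsmul_eq_mul,
      ← Finset.sum_const]
    push_cast
    exact Finset.sum_le_sum fun q hq => hg1 q (hTm q hq).1 (hTm q hq).2.1.le
  have hGm : ∀ c ∈ G, ∃ q ∈ T, ∃ m ∈ g q, c = (fun i => 1 + D * m i, q) := by
    intro c hc
    obtain ⟨⟨q, m⟩, ha, rfl⟩ := Finset.mem_image.1 hc
    rw [Finset.mem_sigma] at ha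
    exact ⟨q, ha.1, m, ha.2, rfl⟩
  refine ⟨G, ?_, ?_, ?_⟩
  · intro c hc
    obtain ⟨q, hq, m, hm, rfl⟩ := hGm c hc
    obtain ⟨h1, h2, h3⟩ := hTm q hq
    obtain ⟨h4, h5, h6⟩ := hg2 q h1 h2.le m hm
    exact ⟨h3, h1, h2, h4, h5, h6⟩
  · have h11 : (1 : ℝ) ≤ 11 ^ n := one_le_pow₀ (by norm_num)
    calc (N : ℝ) ^ (τ * s) ≤ 11 ^ n * (N : ℝ) ^ (τ * s) :=
          le_mul_of_one_le_left (by positivity) h11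
      _ ≤ (N : ℝ) ^ σ * t ^ n / 2 := by linarith
      _ ≤ T.card * t ^ n / 2 := by gcongr
      _ ≤ G.card := by linarith
  · intro x ρ hρ S hSG hS
    refine children_mass i0 hn hN1 hN01 hD1 hs0 hsn hRle T hcard G hGcard ?_ hE1 hE2 x hρ S hSG hS
    intro c hc
    obtain ⟨q, hq, m, hm, rfl⟩ := hGm c hc
    obtain ⟨h1, h2, h3⟩ := hTm q hq
    obtain ⟨h4, h5, h6⟩ := hg2 q h1 h2.le m hm
    exact ⟨hq, lt_of_lt_of_le hN1 h1, h2, h4, m, rfl⟩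

/-! ### Levels of the Cantor construction -/

/-- A level of the Cantor construction: a finite family `F` of rational points with denominators in
`Q ∩ [N, 2N)`, reduced in the coordinate `i0`, with weights `w` of total mass `W` such that balls
of radius `ρ ≥ N^{-τ}` carry mass at most `ρ^s`. The individual weights satisfy a bound with a second exponent `s'`; taking
it larger than `s` leaves room to absorb constants when passing to the next level. -/
structure CantorLevel {n : ℕ} (i0 : Fin n) (Q : Set ℕ) (τ s s' W : ℝ) (N : ℕ)
    (F : Finset ((Fin n → ℤ) × ℕ)) (w : (Fin n → ℤ) × ℕ → ℝ) : Prop where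
  mem : ∀ c ∈ F, c.2 ∈ Q ∧ N ≤ c.2 ∧ c.2 < 2 * N ∧ IsCoprime (c.1 i0) (c.2 : ℤ)
  nonneg : ∀ c, 0 ≤ w c
  total : ∑ c ∈ F, w c = W
  weight_le : ∀ c ∈ F, w c ≤ (N : ℝ) ^ (-(τ * s'))
  mass : ∀ (x : Fin n → ℝ) (ρ : ℝ), (N : ℝ) ^ (-τ) ≤ ρ → ∀ S ⊆ F,
    (∀ c ∈ S, (shellBall τ c ∩ Metric.closedBall x ρ).Nonempty) → ∑ c ∈ S, w c ≤ ρ ^ s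

theorem norm_ratPt_sub_le_of_meets {n : ℕ} {τ ρ : ℝ} {c : (Fin n → ℤ) × ℕ} {x : Fin n → ℝ}
    (h : (shellBall τ c ∩ Metric.closedBall x ρ).Nonempty) :
    ‖ratPt c - x‖ ≤ (c.2 : ℝ) ^ (-τ) + ρ := by
  obtain ⟨y, hy1, hy2⟩ := h
  have h1 := norm_sub_ratPt_le hy1
  rw [Metric.mem_closedBall, dist_eq_norm] at hy2
  have h2 : ratPt c - x = (y - x) - (y - ratPt c) := by abel
  have h3 := norm_sub_le (y - x) (y - ratPt c)
  have h4 : 0 ≤ (c.2 : ℝ) ^ (-τ) := by positivity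
  rw [h2]; linarith

/-- The weights of the next level: the weight of each `c ∈ F` is shared equally by its family of
children `G c`. -/
noncomputable def nextWeight {ι : Type*} [DecidableEq ι] (F : Finset ι) (G : ι → Finset ι)
    (w : ι → ℝ) (c' : ι) : ℝ :=
  ∑ c ∈ F, if c' ∈ G c then w c / (G c).card else 0

theorem sum_nextWeight {ι : Type*} [DecidableEq ι] (F : Finset ι) (G : ι → Finset ι)
    (w : ι → ℝ) (S : Finset ι) :
    ∑ c' ∈ S, nextWeight F G w c' =
      ∑ c ∈ F, w c * ((S.filter (· ∈ G c)).card / (G c).card) := by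
  simp only [nextWeight]
  rw [Finset.sum_comm]
  refine Finset.sum_congr rfl fun c _ => ?_
  rw [← Finset.sum_filter, Finset.sum_const, nsmul_eq_mul]
  ring

theorem card_filter_div_le_one {ι : Type*} [DecidableEq ι] (S G : Finset ι) :
    ((S.filter (· ∈ G)).card : ℝ) / G.card ≤ 1 := by
  refine div_le_one_of_le₀ ?_ (by positivity)
  exact_mod_cast Finset.card_le_card fun c hc => (Finset.mem_filter.1 hc).2

/-- From every sufficiently advanced level one reaches a later one, whose balls lie in those of the
given level and avoid the rationals with denominators in the critical range. -/
theorem exists_next_level {n : ℕ} (hn : 1 ≤ n) (i0 : Fin n) {τ σ s s' : ℝ}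
    (hτ : 2 + 1 / (n : ℝ) < τ) (hσ0 : 0 ≤ σ) (hσ1 : σ ≤ 1) (hs0 : 0 < s) (hss : s < s')
    (hs : s' < (n + σ) / τ)
    (Q : Set ℕ) [DecidablePred (· ∈ Q)]
    (hfreq : ∃ᶠ N : ℕ in atTop, (N : ℝ) ^ σ ≤ ((Finset.Ico N (2 * N)).filter (· ∈ Q)).card) :
    ∀ᶠ N : ℕ in atTop, ∀ W ≤ 1, ∀ F w, CantorLevel i0 Q τ s s' W N F w →
      ∃ N' F' w', N < N' ∧ CantorLevel i0 Q τ s s' W N' F' w' ∧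
        (∀ c' ∈ F', ∃ c ∈ F, shellBall τ c' ⊆ shellBall τ c) ∧
        ∀ c' ∈ F', ∀ d : (Fin n → ℤ) × ℕ, (N : ℝ) ^ (τ - 1) / 2 ≤ d.2 →
          (d.2 : ℝ) ^ (τ - 1) ≤ 4 * N' → 2 * (d.2 : ℝ) ^ (-τ) < ‖ratPt d - ratPt c'‖ := by
  classical
  have hn1 : (1 : ℝ) ≤ n := by exact_mod_cast hn
  have hτ2 : 2 < τ := by
    have : (0 : ℝ) < 1 / n := by positivity
    linarith
  have hsn : s ≤ n := by
    rw [lt_div_iff₀ (by linarith)] at hs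
    nlinarith
  set C : ℝ := 2 * (40 * 2 ^ τ) ^ n with hC
  have e1 := eventually_mul_rpow_le 17 (θ := 2 - τ) (by linarith) one_pos
  have e2 := eventually_mul_rpow_le (C * 2 ^ n) (θ := -(τ * (s' - s))) (by nlinarith)
    (η := 1 / 2) (by norm_num)
  have e3 := eventually_mul_rpow_le (2 ^ s') (θ := -(τ * s')) (by nlinarith)
    (η := 1 / 2) (by norm_num)
  filter_upwards [eventually_family hn i0 hτ hσ0 hσ1 (hs0.trans hss) hs Q, e1, e2, e3,
    eventually_ge_atTop 1] with N hfam e1 e2 e3 hN1 W hW F w hL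
  have hN : (1 : ℝ) ≤ N := by exact_mod_cast hN1
  have hNp : (0 : ℝ) < N := by linarith
  have hev : ∀ᶠ N' : ℕ in atTop, ∀ c ∈ F, _ := (Filter.eventually_all_finset F).2
    fun c hc => hfam c (hL.mem c hc).2.1 (hL.mem c hc).2.2.1
  obtain ⟨N', hN'card, hN'fam, hN'lt⟩ := (hfreq.and_eventually
    (hev.and (eventually_gt_atTop N))).exists
  have hN'1 : (1 : ℝ) ≤ N' := by exact_mod_cast (by omega : 1 ≤ N')
  have hN'p : (0 : ℝ) < N' := by linarith
  have hN'fam' := fun c hc => hN'fam c hc hN'card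
  clear hN'fam
  choose! G hG1 hG2 hG3 using hN'fam'
  have hGpos : ∀ c ∈ F, (0 : ℝ) < (G c).card := fun c hc =>
    lt_of_lt_of_le (by positivity) (hG2 c hc)
  have hmemF' : ∀ c', c' ∈ F.biUnion G ↔ ∃ c ∈ F, c' ∈ G c := fun c' => Finset.mem_biUnion
  refine ⟨N', F.biUnion G, nextWeight F G w, hN'lt, ⟨?_, ?_, ?_, ?_, ?_⟩, ?_, ?_⟩
  · intro c' hc'
    obtain ⟨c, hc, hcc⟩ := (hmemF' c').1 hc'
    obtain ⟨h1, h2, h3, h4, -⟩ := hG1 c hc c' hcc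
    exact ⟨h1, h2, h3, h4⟩
  · intro c'
    refine Finset.sum_nonneg fun c _ => ?_
    have := hL.nonneg c
    split_ifs <;> positivity
  · rw [sum_nextWeight, ← hL.total]
    refine Finset.sum_congr rfl fun c hc => ?_
    have : (F.biUnion G).filter (· ∈ G c) = G c := by
      ext c'
      rw [Finset.mem_filter, hmemF']
      exact ⟨fun h => h.2, fun h => ⟨⟨c, hc, h⟩, h⟩⟩
    rw [this, div_self (hGpos c hc).ne', mul_one]
  · intro c' _
    calc nextWeight F G w c' ≤ ∑ c ∈ F, w c * (N' : ℝ) ^ (-(τ * s')) := by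
          refine Finset.sum_le_sum fun c hc => ?_
          have := hL.nonneg c
          split_ifs
          · rw [div_eq_mul_inv, Real.rpow_neg hN'p.le]
            gcongr
            exact hG2 c hc
          · positivity
      _ = W * (N' : ℝ) ^ (-(τ * s')) := by rw [← Finset.sum_mul, hL.total]
      _ ≤ 1 * (N' : ℝ) ^ (-(τ * s')) := by gcongr
      _ = _ := one_mul _
  · intro x ρ hρ S hS hmeet
    have hρ0 : 0 < ρ := lt_of_lt_of_le (by positivity) hρ
    set P := F.filter (fun c => (shellBall τ c ∩ Metric.closedBall x ρ).Nonempty) with hP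
    have hzero : ∀ c ∈ F, c ∉ P → S.filter (· ∈ G c) = ∅ := by
      intro c hc hcP
      rw [Finset.filter_eq_empty_iff]
      intro c' hc' hcc
      refine hcP (Finset.mem_filter.2 ⟨hc, (hmeet c' hc').mono ?_⟩)
      exact Set.inter_subset_inter_left _ (hG1 c hc c' hcc).2.2.2.2.1
    have hsum : ∑ c' ∈ S, nextWeight F G w c' =
        ∑ c ∈ P, w c * ((S.filter (· ∈ G c)).card / (G c).card) := by
      rw [sum_nextWeight]
      symm
      refine Finset.sum_subset (Finset.filter_subset _ _) fun c hc hcP => ?_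
      rw [hzero c hc hcP]; simp
    rw [hsum]
    -- balls of radius at least `N ^ -τ` are controlled by the mass bound of the given level
    rcases le_or_gt ((N : ℝ) ^ (-τ)) ρ with hρN | hρN
    · refine le_trans (Finset.sum_le_sum fun c _ => ?_) (hL.mass x ρ hρN P
        (Finset.filter_subset _ _) fun c hc => (Finset.mem_filter.1 hc).2)
      exact mul_le_of_le_one_right (hL.nonneg c) (card_filter_div_le_one _ _)
    · have hle : ∀ c ∈ F, (c.2 : ℝ) ^ (-τ) ≤ (N : ℝ) ^ (-τ) := fun c hc =>
        Real.rpow_le_rpow_of_nonpos hNp (by exact_mod_cast (hL.mem c hc).2.1) (by linarith)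
      -- at this scale the parents are so well separated that only one of them meets the ball
      have hsub : ∀ c ∈ P, ∀ d ∈ P, c = d := by
        intro c hc d hd
        rw [hP, Finset.mem_filter] at hc hd
        have h1 := norm_ratPt_sub_le_of_meets hc.2
        have h2 := norm_ratPt_sub_le_of_meets hd.2
        obtain ⟨-, hc1, hc2, hc3⟩ := hL.mem c hc.1
        obtain ⟨-, hd1, hd2, hd3⟩ := hL.mem d hd.1
        by_contra hne
        have hc0 : 0 < c.2 := by omega
        have hd0 : 0 < d.2 := by omega
        have hsep := ratPt_sep hc0 hd0 fun h => hne (ratPt_inj hc0 hd0 hc3 hd3 h)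
        have h3 : ‖ratPt c - ratPt d‖ ≤ 4 * (N : ℝ) ^ (-τ) := by
          have h4 : ratPt c - ratPt d = (ratPt c - x) - (ratPt d - x) := by abel
          rw [h4]
          linarith [norm_sub_le (ratPt c - x) (ratPt d - x), hle c hc.1, hle d hd.1]
        have hc0' : (0 : ℝ) < c.2 := by exact_mod_cast hc0
        have hd0' : (0 : ℝ) < d.2 := by exact_mod_cast hd0
        have hc2' : (c.2 : ℝ) < 2 * N := by exact_mod_cast hc2
        have hd2' : (d.2 : ℝ) < 2 * N := by exact_mod_cast hd2
        have h5 : 1 / ((2 * (N : ℝ)) * (2 * N)) ≤ 1 / ((c.2 : ℝ) * d.2) := by gcongr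
        have h6 : (N : ℝ) ^ (2 - τ) = (N : ℝ) ^ 2 * (N : ℝ) ^ (-τ) := by
          rw [sub_eq_add_neg, Real.rpow_add hNp]; norm_cast
        have h7 : 1 / ((2 * (N : ℝ)) * (2 * N)) ≤ 4 * (N : ℝ) ^ (-τ) :=
          (h5.trans hsep).trans h3
        rw [div_le_iff₀ (by positivity)] at h7
        have h8 : 0 < (N : ℝ) ^ 2 * (N : ℝ) ^ (-τ) := by positivity
        rw [h6] at e1
        nlinarith
      have hterm : ∀ c ∈ P, w c * ((S.filter (· ∈ G c)).card / (G c).card) ≤ ρ ^ s := by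
        intro c hc
        have hcF := (Finset.mem_filter.1 hc).1
        have hcount := hG3 c hcF x (2 * ρ) (by linarith) (S.filter (· ∈ G c))
          (fun c' hc' => (Finset.mem_filter.1 hc').2) (by
            intro c' hc'
            rw [Finset.mem_filter] at hc'
            have h1 := norm_ratPt_sub_le_of_meets (hmeet c' hc'.1)
            have h2 : (c'.2 : ℝ) ^ (-τ) ≤ (N' : ℝ) ^ (-τ) :=
              Real.rpow_le_rpow_of_nonpos hN'p
                (by exact_mod_cast (hG1 c hcF c' hc'.2).2.1) (by linarith)
            linarith)
        have hfrac : ((S.filter (· ∈ G c)).card : ℝ) / (G c).card ≤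
            C * (2 * ρ * (N : ℝ) ^ τ) ^ n + (2 * ρ) ^ s' := by
          rw [div_le_iff₀ (hGpos c hcF), mul_comm]; exact hcount
        have hρN1 : ρ * (N : ℝ) ^ τ ≤ 1 := by
          have : (N : ℝ) ^ (-τ) * (N : ℝ) ^ τ = 1 := by rw [← Real.rpow_add hNp]; simp
          rw [← this]; gcongr
        have hρ1 : ρ ≤ 1 := hρN.le.trans (Real.rpow_le_one_of_one_le_of_nonpos hN (by linarith))
        have hA : (N : ℝ) ^ (-(τ * s')) * (C * (2 * ρ * (N : ℝ) ^ τ) ^ n) ≤ 1 / 2 * ρ ^ s := by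
          have h1 : (ρ * (N : ℝ) ^ τ) ^ n ≤ ρ ^ s * (N : ℝ) ^ (τ * s) := by
            rw [← Real.rpow_natCast, Real.rpow_mul hNp.le, ← Real.mul_rpow hρ0.le (by positivity)]
            exact Real.rpow_le_rpow_of_exponent_ge (by positivity) hρN1 hsn
          calc (N : ℝ) ^ (-(τ * s')) * (C * (2 * ρ * (N : ℝ) ^ τ) ^ n) =
              (N : ℝ) ^ (-(τ * s')) * (C * 2 ^ n * (ρ * (N : ℝ) ^ τ) ^ n) := by
                rw [mul_assoc 2 ρ, mul_pow 2 (ρ * _)]; ring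
            _ ≤ (N : ℝ) ^ (-(τ * s')) * (C * 2 ^ n * (ρ ^ s * (N : ℝ) ^ (τ * s))) := by gcongr
            _ = C * 2 ^ n * (N : ℝ) ^ (-(τ * (s' - s))) * ρ ^ s := by
                have : (N : ℝ) ^ (-(τ * (s' - s))) = (N : ℝ) ^ (-(τ * s')) * (N : ℝ) ^ (τ * s) := by
                  rw [← Real.rpow_add hNp]; congr 1; ring
                rw [this]; ring
            _ ≤ _ := by gcongr
        have hB : (N : ℝ) ^ (-(τ * s')) * (2 * ρ) ^ s' ≤ 1 / 2 * ρ ^ s := by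
          rw [Real.mul_rpow (by norm_num) hρ0.le]
          calc (N : ℝ) ^ (-(τ * s')) * (2 ^ s' * ρ ^ s') =
              2 ^ s' * (N : ℝ) ^ (-(τ * s')) * ρ ^ s' := by ring
            _ ≤ 1 / 2 * ρ ^ s := by
                gcongr ?_ * ?_
                exact Real.rpow_le_rpow_of_exponent_ge hρ0 hρ1 hss.le
        calc w c * ((S.filter (· ∈ G c)).card / (G c).card)
            ≤ (N : ℝ) ^ (-(τ * s')) * (C * (2 * ρ * (N : ℝ) ^ τ) ^ n + (2 * ρ) ^ s') :=
              mul_le_mul (hL.weight_le c hcF) hfrac (by positivity) (by positivity)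
          _ ≤ ρ ^ s := by rw [mul_add]; linarith
      rcases P.eq_empty_or_nonempty with h | ⟨c, hc⟩
      · rw [h, Finset.sum_empty]; positivity
      · have : P = {c} := Finset.eq_singleton_iff_unique_mem.2 ⟨hc, fun d hd => hsub d hd c hc⟩
        rw [this, Finset.sum_singleton]
        exact hterm c hc
  · intro c' hc'
    obtain ⟨c, hc, hcc⟩ := (hmemF' c').1 hc'
    exact ⟨c, hc, (hG1 c hc c' hcc).2.2.2.2.1⟩
  · intro c' hc'
    obtain ⟨c, hc, hcc⟩ := (hmemF' c').1 hc'
    exact (hG1 c hc c' hcc).2.2.2.2.2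

/-! ### The Cantor set and the lower bound -/

/-- A point of the shell ball of `c`, where `c` is at scale `N'` and avoids the critical range, has
no approximation `d` with denominator outside `Q` and in `[N^{τ-1}/2, N'^{τ-1}/2)`: the equality
`ratPt c = ratPt d` is excluded by the shell, and otherwise the two rational points are too far
apart. -/
theorem not_approx {n : ℕ} (i0 : Fin n) {τ : ℝ} (hτ : 2 < τ) {Q : Set ℕ} {N N' : ℕ}
    {c d : (Fin n → ℤ) × ℕ} {x : Fin n → ℝ} (hN' : 0 < N') (hcQ : c.2 ∈ Q) (hc1 : N' ≤ c.2)
    (hc2 : c.2 < 2 * N') (hco : IsCoprime (c.1 i0) (c.2 : ℤ)) (hx : x ∈ shellBall τ c)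
    (havoid : (N : ℝ) ^ (τ - 1) / 2 ≤ d.2 → (d.2 : ℝ) ^ (τ - 1) ≤ 4 * N' →
      2 * (d.2 : ℝ) ^ (-τ) < ‖ratPt d - ratPt c‖)
    (hd0 : 0 < d.2) (hdQ : d.2 ∉ Q) (hd1 : (N : ℝ) ^ (τ - 1) / 2 ≤ d.2)
    (hd2 : (d.2 : ℝ) < (N' : ℝ) ^ (τ - 1) / 2) : (d.2 : ℝ) ^ (-τ) ≤ ‖x - ratPt d‖ := by
  by_contra hlt
  rw [not_le] at hlt
  have hc0 : 0 < c.2 := by omega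
  have hcp : (0 : ℝ) < c.2 := by exact_mod_cast hc0
  have hdp : (0 : ℝ) < d.2 := by exact_mod_cast hd0
  have hN'p : (0 : ℝ) < N' := by exact_mod_cast hN'
  have hc2' : (c.2 : ℝ) < 2 * N' := by exact_mod_cast hc2
  have h1 := norm_sub_ratPt_le hx
  have hpow : ∀ y : ℝ, 0 < y → y ^ (-τ) * y * y ^ (τ - 1) = 1 := by
    intro y hy
    rw [← Real.rpow_add_one hy.ne', ← Real.rpow_add hy]; simp
  by_cases heq : ratPt c = ratPt d
  · obtain ⟨k, hk⟩ := dvd_of_ratPt_eq hc0 hd0 hco heq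
    have hk0 : k ≠ 0 := by rintro rfl; omega
    have hk1 : k ≠ 1 := by rintro rfl; exact hdQ (by rw [hk, mul_one]; exact hcQ)
    have hk2 : 2 * c.2 ≤ d.2 := by
      rw [hk, mul_comm]; exact Nat.mul_le_mul_left _ (by omega)
    have h2 := le_norm_sub_ratPt i0 hx
    rw [heq] at h2
    have h3 : (d.2 : ℝ) ^ (-τ) ≤ (2 * (c.2 : ℝ)) ^ (-τ) :=
      Real.rpow_le_rpow_of_nonpos (by positivity) (by exact_mod_cast hk2) (by linarith)
    rw [Real.mul_rpow (by norm_num) hcp.le] at h3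
    have h4 : (2 : ℝ) ^ (-τ) ≤ 1 / 4 := by
      calc (2 : ℝ) ^ (-τ) ≤ (2 : ℝ) ^ (-2 : ℝ) :=
            Real.rpow_le_rpow_of_exponent_le (by norm_num) (by linarith)
        _ = 1 / 4 := by rw [Real.rpow_neg (by norm_num)]; norm_num
    have h5 : (2 : ℝ) ^ (-τ) * (c.2 : ℝ) ^ (-τ) ≤ 1 / 4 * (c.2 : ℝ) ^ (-τ) := by gcongr
    linarith
  · have hsep := ratPt_sep hc0 hd0 heq
    have h2 : ‖ratPt c - ratPt d‖ < (c.2 : ℝ) ^ (-τ) + (d.2 : ℝ) ^ (-τ) := by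
      have h3 : ratPt c - ratPt d = (x - ratPt d) - (x - ratPt c) := by abel
      have h4 := norm_sub_le (x - ratPt d) (x - ratPt c)
      have h5 : 0 < (c.2 : ℝ) ^ (-τ) := by positivity
      rw [h3]; linarith
    rw [div_le_iff₀ (by positivity)] at hsep
    rcases le_total c.2 d.2 with hle | hle
    · have h3 : (d.2 : ℝ) ^ (-τ) ≤ (c.2 : ℝ) ^ (-τ) :=
        Real.rpow_le_rpow_of_nonpos hcp (by exact_mod_cast hle) (by linarith)
      have h4 : 1 < 2 * (c.2 : ℝ) ^ (-τ) * (c.2 * d.2) :=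
        lt_of_le_of_lt hsep (by gcongr; linarith)
      have h5 : (N' : ℝ) ^ (τ - 1) ≤ (c.2 : ℝ) ^ (τ - 1) :=
        Real.rpow_le_rpow hN'p.le (by exact_mod_cast hc1) (by linarith)
      have h6 : (c.2 : ℝ) ^ (τ - 1) < 2 * d.2 := by
        have h7 : 0 < (c.2 : ℝ) ^ (-τ) * c.2 := by positivity
        refine lt_of_mul_lt_mul_left ?_ h7.le
        rw [hpow _ hcp]; linarith
      linarith
    · have h3 : (c.2 : ℝ) ^ (-τ) ≤ (d.2 : ℝ) ^ (-τ) :=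
        Real.rpow_le_rpow_of_nonpos hdp (by exact_mod_cast hle) (by linarith)
      rcases le_or_gt ((d.2 : ℝ) ^ (τ - 1)) (4 * N') with h4 | h4
      · have h5 := havoid hd1 h4
        rw [norm_sub_rev] at h5
        linarith
      · have h5 : 1 < 2 * (d.2 : ℝ) ^ (-τ) * (c.2 * d.2) :=
          lt_of_le_of_lt hsep (by gcongr; linarith)
        have h6 : (d.2 : ℝ) ^ (τ - 1) < 2 * c.2 := by
          have h7 : 0 < (d.2 : ℝ) ^ (-τ) * d.2 := by positivity
          refine lt_of_mul_lt_mul_left ?_ h7.le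
          rw [hpow _ hdp]; linarith
        linarith

/-- Iterating `exists_next_level` from a single rational point gives a Cantor set inside the liminf
set, and the mass distribution principle applies to it. -/
theorem hausdorffMeasure_WStar_ne_zero {n : ℕ} (hn : 1 ≤ n) {τ σ s s' : ℝ}
    (hτ : 2 + 1 / (n : ℝ) < τ) (hσ0 : 0 ≤ σ) (hσ1 : σ ≤ 1) (hs0 : 0 < s) (hss : s < s')
    (hs : s' < (n + σ) / τ) (Q : Set ℕ) [DecidablePred (· ∈ Q)] (hQinf : Q.Infinite)
    (hfreq : ∃ᶠ N : ℕ in atTop, (N : ℝ) ^ σ ≤ ((Finset.Ico N (2 * N)).filter (· ∈ Q)).card) :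
    μH[s] (WStar n τ Q) ≠ 0 := by
  classical
  have hτ2 : 2 < τ := by
    have : (0 : ℝ) < 1 / n := by positivity
    linarith
  let i0 : Fin n := ⟨0, hn⟩
  obtain ⟨Nmin, hNmin⟩ := eventually_atTop.1 ((exists_next_level hn i0 hτ hσ0 hσ1 hs0 hss hs Q
    hfreq).and (eventually_ge_atTop 1))
  obtain ⟨q0, hq0Q, hq0⟩ := hQinf.exists_gt Nmin
  have hq01 : 1 ≤ q0 := (hNmin q0 hq0.le).2
  have hq0R : (1 : ℝ) ≤ q0 := by exact_mod_cast hq01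
  have hq0p : (0 : ℝ) < q0 := by linarith
  set W := (q0 : ℝ) ^ (-(τ * s')) with hWdef
  have hW0 : 0 < W := by positivity
  have hW1 : W ≤ 1 := Real.rpow_le_one_of_one_le_of_nonpos hq0R (by nlinarith)
  let c0 : (Fin n → ℤ) × ℕ := (fun _ => 1, q0)
  -- the initial level is the single point `(1, …, 1) / q0`; its mass `W` is small enough for the
  -- mass bound to hold at once
  have hstart : CantorLevel i0 Q τ s s' W q0 {c0} (fun _ => W) := by
    refine ⟨?_, fun _ => hW0.le, by simp, fun _ _ => le_rfl, ?_⟩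
    · intro c hc
      rw [Finset.mem_singleton] at hc
      subst hc
      exact ⟨hq0Q, le_rfl, by change q0 < 2 * q0; omega, isCoprime_one_left⟩
    · intro x ρ hρ S hS _
      calc ∑ c ∈ S, W ≤ ∑ c ∈ {c0}, W :=
            Finset.sum_le_sum_of_subset_of_nonneg hS fun _ _ _ => hW0.le
        _ = W := by simp
        _ ≤ (q0 : ℝ) ^ (-τ * s) := Real.rpow_le_rpow_of_exponent_le hq0R (by nlinarith)
        _ = ((q0 : ℝ) ^ (-τ)) ^ s := by rw [Real.rpow_mul hq0p.le]
        _ ≤ ρ ^ s := by gcongr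
  let St := {a : ℕ × Finset ((Fin n → ℤ) × ℕ) × ((Fin n → ℤ) × ℕ → ℝ) //
    Nmin ≤ a.1 ∧ CantorLevel i0 Q τ s s' W a.1 a.2.1 a.2.2}
  have hstep : ∀ a : St, ∃ b : St, a.1.1 < b.1.1 ∧
      (∀ c' ∈ b.1.2.1, ∃ c ∈ a.1.2.1, shellBall τ c' ⊆ shellBall τ c) ∧
        ∀ c' ∈ b.1.2.1, ∀ d : (Fin n → ℤ) × ℕ, (a.1.1 : ℝ) ^ (τ - 1) / 2 ≤ d.2 →
          (d.2 : ℝ) ^ (τ - 1) ≤ 4 * b.1.1 → 2 * (d.2 : ℝ) ^ (-τ) < ‖ratPt d - ratPt c'‖ := by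
    rintro ⟨⟨N, F, w⟩, hN, hL⟩
    obtain ⟨N', F', w', h1, h2, h3, h4⟩ := (hNmin N hN).1 W hW1 F w hL
    exact ⟨⟨⟨N', F', w'⟩, hN.trans h1.le, h2⟩, h1, h3, h4⟩
  choose next hnext1 hnext2 hnext3 using hstep
  let seq : ℕ → St := fun k => Nat.rec ⟨⟨q0, {c0}, fun _ => W⟩, hq0.le, hstart⟩ (fun _ a => next a) k
  have hseq : ∀ k, seq (k + 1) = next (seq k) := fun k => rfl
  set N : ℕ → ℕ := fun k => (seq k).1.1 with hNdef
  set F : ℕ → Finset ((Fin n → ℤ) × ℕ) := fun k => (seq k).1.2.1 with hFdef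
  set w : ℕ → (Fin n → ℤ) × ℕ → ℝ := fun k => (seq k).1.2.2 with hwdef
  have hL : ∀ k, CantorLevel i0 Q τ s s' W (N k) (F k) (w k) := fun k => (seq k).2.2
  have hNpos : ∀ k, 0 < N k := fun k => (hNmin _ (seq k).2.1).2
  have hNmono : StrictMono N := strictMono_nat_of_lt_succ fun k => hnext1 (seq k)
  have hnest : ∀ k, ∀ c' ∈ F (k + 1), ∃ c ∈ F k, shellBall τ c' ⊆ shellBall τ c :=
    fun k => hnext2 (seq k)
  have havoid : ∀ k, ∀ c' ∈ F (k + 1), ∀ d : (Fin n → ℤ) × ℕ, (N k : ℝ) ^ (τ - 1) / 2 ≤ d.2 →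
          (d.2 : ℝ) ^ (τ - 1) ≤ 4 * N (k + 1) → 2 * (d.2 : ℝ) ^ (-τ) < ‖ratPt d - ratPt c'‖ :=
    fun k => hnext3 (seq k)
  clear_value N F w
  have hNtop : Tendsto (fun k => (N k : ℝ)) atTop atTop :=
    tendsto_natCast_atTop_atTop.comp hNmono.tendsto_atTop
  let K : ℕ → Set (Fin n → ℝ) := fun k => ⋃ c ∈ F k, shellBall τ c
  have hKmem : ∀ k x, x ∈ K k ↔ ∃ c ∈ F k, x ∈ shellBall τ c := fun k x => by simp [K]
  have hne := hausdorffMeasure_iInter_ne_zero hs0 K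
    (fun k => (F k).isCompact_biUnion fun c _ => isCompact_closedBall _ _)
    (antitone_nat_of_succ_le fun k x hx => by
      obtain ⟨c', hc', hx⟩ := (hKmem _ _).1 hx
      obtain ⟨c, hc, hsub⟩ := hnest k c' hc'
      exact (hKmem _ _).2 ⟨c, hc, hsub hx⟩)
    F (shellBall τ) w (fun k c _ => (hL k).nonneg c) (shellBall_nonempty τ)
    (fun k c hc x hx => (hKmem _ _).2 ⟨c, hc, hx⟩) (fun k => (N k : ℝ) ^ (-τ))
    ((tendsto_rpow_neg_atTop (by linarith : 0 < τ)).comp hNtop) W hW0 (fun k => (hL k).total)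
    (fun k x ρ hρ S hS hm => (hL k).mass x ρ hρ S hS hm)
  refine fun h0 => hne (measure_mono_null ?_ h0)
  intro x hx
  rw [Set.mem_iInter] at hx
  have hxc : ∀ k, ∃ c ∈ F k, x ∈ shellBall τ c := fun k => (hKmem k x).1 (hx k)
  refine ⟨?_, ?_⟩
  · intro hfin
    obtain ⟨B, hB⟩ := (hfin.image Prod.snd).bddAbove
    obtain ⟨c, hc, hxc⟩ := hxc (B + 1)
    obtain ⟨h1, h2, -, -⟩ := (hL _).mem c hc
    have hcp : (0 : ℝ) < c.2 := by exact_mod_cast lt_of_lt_of_le (hNpos _) h2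
    have hcA : c ∈ approxPairs n τ Q x := by
      refine ⟨h1, lt_of_le_of_lt (norm_sub_ratPt_le hxc) ?_⟩
      have : 0 < (c.2 : ℝ) ^ (-τ) := by positivity
      linarith
    have h3 := hB (Set.mem_image_of_mem _ hcA)
    have h4 := hNmono.id_le (B + 1)
    simp only [id] at h4
    omega
  · -- denominators outside `Q` of approximations to `x` are bounded
    have hbound : ∀ d ∈ approxPairs n τ ({q | 0 < q} \ Q) x, (d.2 : ℝ) < (N 0 : ℝ) ^ (τ - 1) / 2 := by
      rintro d ⟨⟨hd0, hdQ⟩, hd⟩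
      have hd0 : 0 < d.2 := hd0
      have hex : ∃ k, (d.2 : ℝ) < (N k : ℝ) ^ (τ - 1) / 2 := by
        have := ((tendsto_rpow_atTop (by linarith : 0 < τ - 1)).comp hNtop).eventually
          (eventually_gt_atTop (2 * (d.2 : ℝ)))
        obtain ⟨k, hk⟩ := this.exists
        refine ⟨k, ?_⟩
        simp only [Function.comp] at hk
        linarith
      -- the first such `k`, if positive, puts `d` in the range excluded at level `k`
      rcases Nat.eq_zero_or_pos (Nat.find hex) with h0 | h0
      · have := Nat.find_spec hex
        rwa [h0] at this
      · exfalso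
        obtain ⟨k, hk⟩ := Nat.exists_eq_succ_of_ne_zero h0.ne'
        have h1 := Nat.find_spec hex
        have h2 := not_lt.1 (Nat.find_min hex (m := k) (by omega))
        rw [hk] at h1
        obtain ⟨c, hc, hxc⟩ := hxc (k + 1)
        obtain ⟨hm1, hm2, hm3, hm4⟩ := (hL (k + 1)).mem c hc
        exact not_lt.2 (not_approx i0 hτ2 (hNpos (k + 1)) hm1 hm2 hm3 hm4 hxc
          (havoid k c hc d) hd0 hdQ h2 h1) hd
    set b := (N 0 : ℝ) ^ (τ - 1) / 2
    have hb0 : 0 ≤ b := by positivity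
    set M := ⌈b * (‖x‖ + 1)⌉
    refine ((Set.finite_Icc (fun _ : Fin n => -M) (fun _ => M)).prod (Set.finite_Iic ⌈b⌉₊)).subset ?_
    intro d hd
    have h1 := hbound d hd
    obtain ⟨⟨hd0, -⟩, hd⟩ := hd
    have hdp : (0 : ℝ) < d.2 := by exact_mod_cast hd0
    have hd1 : (1 : ℝ) ≤ d.2 := by exact_mod_cast hd0
    have h2 : (d.2 : ℝ) ^ (-τ) ≤ 1 := Real.rpow_le_one_of_one_le_of_nonpos hd1 (by linarith)
    have h3 : ∀ i, |(d.1 i : ℝ)| ≤ M := by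
      intro i
      have h4 := (norm_le_pi_norm (x - fun i => (d.1 i : ℝ) / (d.2 : ℝ)) i).trans (hd.le.trans h2)
      have h5 := norm_le_pi_norm x i
      rw [Pi.sub_apply, Real.norm_eq_abs] at h4
      rw [Real.norm_eq_abs] at h5
      have h6 : |(d.1 i : ℝ) / d.2| ≤ ‖x‖ + 1 := by
        rw [abs_le] at h4 h5 ⊢
        constructor <;> linarith [h4.1, h4.2, h5.1, h5.2]
      rw [abs_div, abs_of_pos hdp, div_le_iff₀ hdp] at h6
      refine le_trans h6 (le_trans ?_ (Int.le_ceil _))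
      rw [mul_comm]
      gcongr
    have h4 : ∀ i, |d.1 i| ≤ M := fun i => by exact_mod_cast h3 i
    refine ⟨⟨fun i => (abs_le.1 (h4 i)).1, fun i => (abs_le.1 (h4 i)).2⟩, ?_⟩
    have h5 : (d.2 : ℝ) ≤ ⌈b⌉₊ := h1.le.trans (Nat.le_ceil b)
    exact_mod_cast h5

theorem le_dimH_WStar {n : ℕ} (hn : 1 ≤ n) {τ : ℝ} (hτ : 2 + 1 / (n : ℝ) < τ) (Q : Set ℕ)
    (hQinf : Q.Infinite) :
    ENNReal.ofReal ((n + expConv Q) / τ) ≤ dimH (WStar n τ Q) := by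
  classical
  have hτ2 : 2 < τ := by
    have : (0 : ℝ) < 1 / n := by positivity
    linarith
  have hτ0 : 0 < τ := by linarith
  have hn1 : (1 : ℝ) ≤ n := by exact_mod_cast hn
  have hν0 := expConv_nonneg Q
  have hν1 := expConv_le_one Q
  refine le_of_forall_lt fun a ha => ?_
  obtain ⟨s0, hs0, has0, hs0lt⟩ := ENNReal.lt_iff_exists_real_btwn.1 ha
  have hs0' : s0 < (n + expConv Q) / τ := by
    rw [ENNReal.ofReal_lt_ofReal_iff (by positivity)] at hs0lt
    exact hs0lt
  obtain ⟨s, hs1, hs2⟩ := exists_between hs0'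
  obtain ⟨s', hs'1, hs'2⟩ := exists_between hs2
  have hsp : 0 < s := lt_of_le_of_lt hs0 hs1
  obtain ⟨σ, hσ0, hσ1, hσs, hfreq⟩ : ∃ σ : ℝ, 0 ≤ σ ∧ σ ≤ 1 ∧ s' < (n + σ) / τ ∧
      ∃ᶠ N : ℕ in atTop, (N : ℝ) ^ σ ≤ ((Finset.Ico N (2 * N)).filter (· ∈ Q)).card := by
    rcases hν0.eq_or_lt with h0 | h0
    -- for `ν(Q) = 0` the exponent `σ = 0` works because `Q` is infinite
    · refine ⟨0, le_rfl, zero_le_one, by rwa [← h0] at hs'2, ?_⟩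
      refine frequently_atTop.2 fun a => ?_
      obtain ⟨q, hq, hqa⟩ := hQinf.exists_gt a
      refine ⟨q, hqa.le, ?_⟩
      rw [Real.rpow_zero, Nat.one_le_cast, Nat.one_le_iff_ne_zero, Finset.card_ne_zero]
      exact ⟨q, Finset.mem_filter.2 ⟨Finset.mem_Ico.2 ⟨le_rfl, by omega⟩, hq⟩⟩
    · rw [lt_div_iff₀ hτ0] at hs'2
      obtain ⟨σ, hσ1, hσ2⟩ := exists_between (max_lt h0 (by linarith : s' * τ - n < expConv Q))
      rw [max_lt_iff] at hσ1
      refine ⟨σ, hσ1.1.le, hσ2.le.trans hν1, ?_, frequently_card_ge hσ1.1 hσ2⟩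
      rw [lt_div_iff₀ hτ0]; linarith [hσ1.2]
  have hne := hausdorffMeasure_WStar_ne_zero hn hτ hσ0 hσ1 hsp hs'1 hσs Q hQinf hfreq
  have hle : ENNReal.ofReal s ≤ dimH (WStar n τ Q) := by
    have hs3 : ((s.toNNReal : NNReal) : ℝ) = s := Real.coe_toNNReal s hsp.le
    exact le_dimH_of_hausdorffMeasure_ne_zero (d := s.toNNReal) (by rw [hs3]; exact hne)
  refine lt_of_lt_of_le has0 (le_trans (ENNReal.ofReal_le_ofReal hs1.le) hle)

theorem dimH_WStar (Q : Set ℕ) (hQpos : ∀ q ∈ Q, 0 < q) (hQinf : Q.Infinite)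
    (n : ℕ) (hn : 1 ≤ n) (τ : ℝ) (hτ : 2 + 1 / (n : ℝ) < τ) :
    dimH (WStar n τ Q) = ENNReal.ofReal ((n + expConv Q) / τ) := by
  have hn0 : (0 : ℝ) ≤ 1 / n := by positivity
  exact le_antisymm (dimH_WStar_le Q hQpos n τ (by linarith) hn) (le_dimH_WStar hn hτ Q hQinf)
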